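/- arXiv:1708.07646 — 2 statements merged into one kernel-verified Lean document; each statement's English description precedes it below -/
import Mathlib

section
/- There exists an anti-Pasch maximum partial triple system of order 17 of Type-Q, and there exists an anti-Pasch maximum partial triple system of order 17 of Type-N. -/
def isPTS {n : ℕ} (B : Finset (Finset (Fin n))) : Prop :=
  (∀ T ∈ B, T.card = 3) ∧
  ∀ p : Finset (Fin n), p.card = 2 → ∀ T₁ ∈ B, ∀ T₂ ∈ B, p ⊆ T₁ → p ⊆ T₂ → T₁ = T₂

def isMMPTS {n : ℕ} (B : Finset (Finset (Fin n))) : Prop :=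
  isPTS B ∧ ∀ B' : Finset (Finset (Fin n)), isPTS B' → B'.card ≤ B.card

def leave {n : ℕ} (B : Finset (Finset (Fin n))) : Set (Finset (Fin n)) :=
  {p | p.card = 2 ∧ ∀ T ∈ B, ¬ p ⊆ T}

def isTypeQ {n : ℕ} (B : Finset (Finset (Fin n))) : Prop :=
  ∃ a b c d : Fin n, a ≠ b ∧ a ≠ c ∧ a ≠ d ∧ b ≠ c ∧ b ≠ d ∧ c ≠ d ∧
    leave B = {{a, b}, {b, c}, {c, d}, {d, a}} ∧
    ∃ e : Fin n, ({a, c, e} : Finset (Fin n)) ∈ B ∧ ({b, d, e} : Finset (Fin n)) ∈ B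

def isPasch {n : ℕ} (B P : Finset (Finset (Fin n))) : Prop :=
  ∃ a b c d e f : Fin n, ({a, b, c, d, e, f} : Finset (Fin n)).card = 6 ∧
    P = {{a, b, c}, {a, d, e}, {b, d, f}, {c, e, f}} ∧ P ⊆ B

section UpperBound

variable {B : Finset (Finset (Fin 17))}

def coverSet (B : Finset (Finset (Fin 17))) (x : Fin 17) : Finset (Fin 17) :=
  (B.filter (fun T => x ∈ T)).biUnion (fun T => T.erase x)

lemma card_coverSet (h : isPTS B) (x : Fin 17) :
    (coverSet B x).card = 2 * (B.filter (fun T => x ∈ T)).card := by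
  unfold coverSet
  rw [Finset.card_biUnion]
  · rw [Finset.sum_congr rfl (g := fun _ => 2)]
    · simp [mul_comm]
    · intro T hT
      rw [Finset.mem_filter] at hT
      rw [Finset.card_erase_of_mem hT.2, h.1 T hT.1]
  · intro T hT S hS hne
    simp only [Finset.coe_filter, Set.mem_ofPred_eq] at hT hS
    simp only [Function.onFun, Finset.disjoint_left]
    intro y hy hy'
    rw [Finset.mem_erase] at hy hy'
    apply hne
    refine h.2 {x, y} (Finset.card_pair (Ne.symm hy.1)) T hT.1 S hS.1 ?_ ?_
    · intro z hz
      simp only [Finset.mem_insert, Finset.mem_singleton] at hz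
      rcases hz with rfl | rfl
      · exact hT.2
      · exact hy.2
    · intro z hz
      simp only [Finset.mem_insert, Finset.mem_singleton] at hz
      rcases hz with rfl | rfl
      · exact hS.2
      · exact hy'.2

lemma coverSet_subset (x : Fin 17) : coverSet B x ⊆ Finset.univ.erase x := by
  intro y hy
  simp only [coverSet, Finset.mem_biUnion, Finset.mem_erase] at hy
  obtain ⟨T, _, hy, _⟩ := hy
  simp [hy]

lemma coverSet_symm {x y : Fin 17} (hy : y ∈ coverSet B x) : x ∈ coverSet B y := by
  simp only [coverSet, Finset.mem_biUnion, Finset.mem_erase, Finset.mem_filter] at hy ⊢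
  obtain ⟨T, ⟨hT, hx⟩, hne, hyT⟩ := hy
  exact ⟨T, ⟨hT, hyT⟩, hne.symm, hx⟩

lemma card_le_of_isPTS (h : isPTS B) : B.card ≤ 44 := by
  set d : Fin 17 → ℕ := fun x => (B.filter (fun T => x ∈ T)).card with hd
  have hsum : ∑ x, d x = 3 * B.card := by
    have h1 : ∑ x, d x = ∑ T ∈ B, T.card := by
      simp only [hd, Finset.card_filter]
      rw [Finset.sum_comm]
      refine Finset.sum_congr rfl fun T _ => ?_
      simp
    rw [h1, Finset.sum_congr rfl h.1]
    simp [mul_comm]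
  have hcard : ∀ x, (coverSet B x).card = 2 * d x := card_coverSet h
  have herase : ∀ x : Fin 17, (Finset.univ.erase x).card = 16 := by intro x; simp
  have hle : ∀ x, d x ≤ 8 := by
    intro x
    have := Finset.card_le_card (coverSet_subset (B := B) x)
    rw [hcard, herase] at this
    omega
  by_contra hB
  push Not at hB
  have hex : ∃ x, d x < 8 := by
    by_contra hno
    push Not at hno
    have : ∑ x, d x = ∑ _x : Fin 17, 8 :=
      Finset.sum_congr rfl fun x _ => le_antisymm (hle x) (hno x)
    simp at this
    omega
  obtain ⟨x, hx⟩ := hex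
  have hy : ∃ y, y ∈ Finset.univ.erase x ∧ y ∉ coverSet B x := by
    by_contra hno
    push Not at hno
    have := Finset.card_le_card (show Finset.univ.erase x ⊆ coverSet B x from fun y hy => hno y hy)
    rw [hcard, herase] at this
    omega
  obtain ⟨y, hyx, hyc⟩ := hy
  have hne : y ≠ x := (Finset.mem_erase.1 hyx).1
  have hdy : d y < 8 := by
    by_contra hge
    have heq : coverSet B y = Finset.univ.erase y := by
      apply Finset.eq_of_subset_of_card_le (coverSet_subset y)
      rw [hcard, herase]
      omega
    exact hyc (coverSet_symm (by rw [heq]; simp [hne.symm]))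
  have h1 := Finset.add_sum_erase Finset.univ d (Finset.mem_univ x)
  have h2 := Finset.add_sum_erase (Finset.univ.erase x) d hyx
  have h3 : ∑ z ∈ (Finset.univ.erase x).erase y, d z ≤ 15 * 8 := by
    have := Finset.sum_le_card_nsmul ((Finset.univ.erase x).erase y) d 8 (fun z _ => hle z)
    rw [Finset.card_erase_of_mem hyx, herase] at this
    simpa using this
  omega

end UpperBound

section Construction

/-- The entry at `(a, b)` of a `17 × 17` table coded in base 32 (31 = undefined). -/
def third (t : ℕ) (a b : Fin 17) : ℕ := (t >>> (5 * (17 * a.val + b.val))) % 32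

def TRel (t : ℕ) (a b c : Fin 17) : Prop := third t a b = c.val

instance (t : ℕ) (a b c : Fin 17) : Decidable (TRel t a b c) :=
  inferInstanceAs (Decidable (_ = _))

def baseTriples (t : ℕ) : Finset (Fin 17 × Fin 17 × Fin 17) :=
  Finset.univ.filter (fun p => p.1 < p.2.1 ∧ p.2.1 < p.2.2 ∧ TRel t p.1 p.2.1 p.2.2)

def blocks (t : ℕ) : Finset (Finset (Fin 17)) :=
  (baseTriples t).image (fun p => {p.1, p.2.1, p.2.2})

def goodSymm (t : ℕ) : Prop := ∀ a b c : Fin 17, TRel t a b c →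
  TRel t b a c ∧ TRel t a c b ∧ a ≠ b ∧ a ≠ c ∧ b ≠ c

def Undef (t : ℕ) (a b : Fin 17) : Prop := a ≠ b ∧ third t a b = 31

instance (t : ℕ) (a b : Fin 17) : Decidable (Undef t a b) :=
  inferInstanceAs (Decidable (_ ∧ _))

def goodLeave (t : ℕ) : Prop := ∀ a b : Fin 17, a ≠ b →
  ((third t a b < 17 ∧ ¬ ((a = 0 ∨ a = 2) ∧ (b = 1 ∨ b = 3)) ∧
      ¬ ((a = 1 ∨ a = 3) ∧ (b = 0 ∨ b = 2))) ∨
   (third t a b = 31 ∧ (((a = 0 ∨ a = 2) ∧ (b = 1 ∨ b = 3)) ∨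
      ((a = 1 ∨ a = 3) ∧ (b = 0 ∨ b = 2)))))

def goodPasch (t : ℕ) : Prop := ∀ a b c : Fin 17, TRel t a b c → ∀ d e : Fin 17, TRel t a d e →
  b ≠ d → c ≠ d → third t b d < 17 → third t c e ≠ third t b d

variable {t : ℕ}

lemma mem_blocks (h : goodSymm t) {S : Finset (Fin 17)} :
    S ∈ blocks t ↔ ∃ a b c, TRel t a b c ∧ S = {a, b, c} := by
  simp only [blocks, baseTriples, Finset.mem_image, Finset.mem_filter, Finset.mem_univ, true_and,
    Prod.exists]
  constructor
  · rintro ⟨a, b, c, ⟨_, _, hr⟩, rfl⟩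
    exact ⟨a, b, c, hr, rfl⟩
  · rintro ⟨a, b, c, hr, rfl⟩
    obtain ⟨h1, h2, hab, hac, hbc⟩ := h a b c hr
    have h3 := (h b a c h1).2.1
    have h4 := (h a c b h2).1
    have h5 := (h c a b h4).2.1
    rcases lt_or_gt_of_ne hab with h6 | h6 <;> rcases lt_or_gt_of_ne hac with h7 | h7 <;>
      rcases lt_or_gt_of_ne hbc with h8 | h8
    · exact ⟨a, b, c, ⟨h6, h8, hr⟩, rfl⟩
    · exact ⟨a, c, b, ⟨h7, h8, h2⟩, by ext; simp; tauto⟩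
    · omega
    · exact ⟨c, a, b, ⟨h7, h6, h4⟩, by ext; simp; tauto⟩
    · exact ⟨b, a, c, ⟨h6, h7, h1⟩, by ext; simp; tauto⟩
    · omega
    · exact ⟨b, c, a, ⟨h8, h7, h3⟩, by ext; simp; tauto⟩
    · exact ⟨c, b, a, ⟨h8, h6, h5⟩, by ext; simp; tauto⟩

lemma pair_in_block (h : goodSymm t) {S : Finset (Fin 17)} (hS : S ∈ blocks t) {x y : Fin 17}
    (hxy : x ≠ y) (hx : x ∈ S) (hy : y ∈ S) : ∃ z, TRel t x y z ∧ S = {x, y, z} := by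
  obtain ⟨a, b, c, hr, rfl⟩ := (mem_blocks h).1 hS
  obtain ⟨h1, h2, hab, hac, hbc⟩ := h a b c hr
  have h3 := (h b a c h1).2.1
  have h4 := (h a c b h2).1
  have h5 := (h c a b h4).2.1
  simp only [Finset.mem_insert, Finset.mem_singleton] at hx hy
  rcases hx with rfl | rfl | rfl <;> rcases hy with rfl | rfl | rfl
  · exact absurd rfl hxy
  · exact ⟨c, hr, rfl⟩
  · exact ⟨b, h2, by ext; simp; tauto⟩
  · exact ⟨c, h1, by ext; simp; tauto⟩
  · exact absurd rfl hxy
  · exact ⟨a, h3, by ext; simp; tauto⟩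
  · exact ⟨b, h4, by ext; simp; tauto⟩
  · exact ⟨a, h5, by ext; simp; tauto⟩
  · exact absurd rfl hxy

lemma rel_of_mem (h : goodSymm t) {x y z : Fin 17} (hxy : x ≠ y) (hxz : x ≠ z) (hyz : y ≠ z)
    (hS : ({x, y, z} : Finset (Fin 17)) ∈ blocks t) : TRel t x y z := by
  obtain ⟨w, hw, he⟩ := pair_in_block h hS hxy (by simp) (by simp)
  have : z ∈ ({x, y, w} : Finset (Fin 17)) := by rw [← he]; simp
  simp only [Finset.mem_insert, Finset.mem_singleton] at this
  rcases this with h1 | h1 | h1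
  · exact absurd h1.symm hxz
  · exact absurd h1.symm hyz
  · rwa [h1]

lemma blocks_isPTS (h : goodSymm t) : isPTS (blocks t) := by
  constructor
  · intro T hT
    obtain ⟨a, b, c, hr, rfl⟩ := (mem_blocks h).1 hT
    obtain ⟨-, -, hab, hac, hbc⟩ := h a b c hr
    exact Finset.card_eq_three.2 ⟨a, b, c, hab, hac, hbc, rfl⟩
  · intro p hp T₁ h1 T₂ h2 hp1 hp2
    obtain ⟨x, y, hxy, rfl⟩ := Finset.card_eq_two.1 hp
    obtain ⟨z, hz, e1⟩ := pair_in_block h h1 hxy (hp1 (by simp)) (hp1 (by simp))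
    obtain ⟨w, hw, e2⟩ := pair_in_block h h2 hxy (hp2 (by simp)) (hp2 (by simp))
    have : z = w := Fin.ext (hz.symm.trans hw)
    rw [e1, e2, this]

lemma blocks_card : (blocks t).card = (baseTriples t).card := by
  apply Finset.card_image_of_injOn
  rintro ⟨a, b, c⟩ h1 ⟨a', b', c'⟩ h2 he
  simp only [baseTriples, Finset.coe_filter, Set.mem_ofPred_eq, Finset.mem_univ, true_and] at h1 h2
  simp only at he
  have k1 : a ∈ ({a', b', c'} : Finset (Fin 17)) := he ▸ by simp
  have k2 : b ∈ ({a', b', c'} : Finset (Fin 17)) := he ▸ by simp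
  have k3 : c ∈ ({a', b', c'} : Finset (Fin 17)) := he ▸ by simp
  simp only [Finset.mem_insert, Finset.mem_singleton] at k1 k2 k3
  obtain ⟨p1, p2, -⟩ := h1
  obtain ⟨q1, q2, -⟩ := h2
  have : a = a' ∧ b = b' ∧ c = c' := by omega
  obtain ⟨rfl, rfl, rfl⟩ := this
  rfl

lemma blocks_isMMPTS (h : goodSymm t) (hc : (baseTriples t).card = 44) : isMMPTS (blocks t) :=
  ⟨blocks_isPTS h, fun B' hB' => by rw [blocks_card, hc]; exact card_le_of_isPTS hB'⟩

lemma pair_mem_leave (h : goodSymm t) (hl : goodLeave t) {x y : Fin 17} (hxy : x ≠ y) :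
    ({x, y} : Finset (Fin 17)) ∈ leave (blocks t) ↔ third t x y = 31 := by
  constructor
  · rintro ⟨-, hn⟩
    rcases hl x y hxy with h1 | h1
    · exfalso
      refine hn {x, y, ⟨third t x y, h1.1⟩} ((mem_blocks h).2 ⟨x, y, ⟨third t x y, h1.1⟩, (show third t x y = third t x y from rfl), rfl⟩) ?_
      intro z; simp; tauto
    · exact h1.1
  · intro h31
    refine ⟨Finset.card_pair hxy, fun T hT hsub => ?_⟩
    obtain ⟨z, hz, -⟩ := pair_in_block h hT hxy (hsub (by simp)) (hsub (by simp))
    unfold TRel at hz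
    have := z.isLt
    omega

lemma leave_blocks (h : goodSymm t) (hl : goodLeave t) :
    leave (blocks t) = {{0, 1}, {1, 2}, {2, 3}, {3, 0}} := by
  ext p
  constructor
  · intro hp
    obtain ⟨x, y, hxy, rfl⟩ := Finset.card_eq_two.1 hp.1
    rw [pair_mem_leave h hl hxy] at hp
    rcases hl x y hxy with h1 | ⟨-, h1⟩
    · omega
    · have c1 : ({1, 0} : Finset (Fin 17)) = {0, 1} := Finset.pair_comm _ _
      have c2 : ({2, 1} : Finset (Fin 17)) = {1, 2} := Finset.pair_comm _ _
      have c3 : ({3, 2} : Finset (Fin 17)) = {2, 3} := Finset.pair_comm _ _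
      have c4 : ({0, 3} : Finset (Fin 17)) = {3, 0} := Finset.pair_comm _ _
      simp only [Set.mem_insert_iff, Set.mem_singleton_iff]
      rcases h1 with ⟨rfl | rfl, rfl | rfl⟩ | ⟨rfl | rfl, rfl | rfl⟩ <;>
        simp only [c1, c2, c3, c4, true_or, or_true]
  · have key : ∀ x y : Fin 17, x ≠ y → (((x = 0 ∨ x = 2) ∧ (y = 1 ∨ y = 3)) ∨
      ((x = 1 ∨ x = 3) ∧ (y = 0 ∨ y = 2))) → ({x, y} : Finset (Fin 17)) ∈ leave (blocks t) := by
      intro x y hxy hh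
      rw [pair_mem_leave h hl hxy]
      rcases hl x y hxy with h1 | h1
      · tauto
      · exact h1.1
    simp only [Set.mem_insert_iff, Set.mem_singleton_iff]
    rintro (rfl | rfl | rfl | rfl) <;> exact key _ _ (by decide) (by decide)

lemma blocks_antiPasch (h : goodSymm t) (hp : goodPasch t) (P : Finset (Finset (Fin 17))) :
    ¬ isPasch (blocks t) P := by
  rintro ⟨a, b, c, d, e, f, hcard, rfl, hsub⟩
  have hnd : [a, b, c, d, e, f].Nodup := by
    rw [← Multiset.coe_nodup, ← Multiset.toFinset_card_eq_card_iff_nodup]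
    simpa using hcard
  simp only [List.nodup_cons, List.mem_cons, not_or, List.not_mem_nil, not_false_eq_true,
    List.nodup_nil, and_true] at hnd
  obtain ⟨⟨ab, ac, ad, ae, af⟩, ⟨bc, bd, be, bf⟩, ⟨cd, ce, cf⟩, ⟨de, df⟩, ef⟩ := hnd
  have r1 := rel_of_mem h ab ac bc (hsub (by simp))
  have r2 := rel_of_mem h ad ae de (hsub (by simp))
  have r3 := rel_of_mem h bd bf df (hsub (by simp))
  have r4 := rel_of_mem h ce cf ef (hsub (by simp))
  unfold TRel at r3 r4
  exact hp a b c r1 d e r2 bd cd (by rw [r3]; exact f.isLt) (r4.trans r3.symm)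

end Construction

def tableQ : ℕ := 945323524259639447488456480771996771724150351416215831007227858288362356002614762783748877643997660124623554813513367883156966926932748889547378360072445880363627845886484718640735003379325667924389199088272775507275176050839988559151699638784736203953833440477276432458842635006128220001651569811314585317738545987338592916935143544010587691641317275499609770028581891078943077040335939022777877315656493547130438934616511034401199103

def tableN : ℕ := 949785209050679041142662474213130831382065222571362219071987485973489743414949275428912355891268358873073901104889148451939239410933688518462853530548182718759952373842895442562490985800630033042091018105986808077179531493325288659395167028219396980727819217568134444177930881087481093832656698497937087698783632091886467023669266039969104704988135706762235071840525331755255526631187505573916205487555820532081366162406531230317122559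

lemma tableQ_symm : goodSymm tableQ := by unfold goodSymm; decide +kernel
lemma tableN_symm : goodSymm tableN := by unfold goodSymm; decide +kernel
lemma tableQ_leave : goodLeave tableQ := by unfold goodLeave; decide +kernel
lemma tableN_leave : goodLeave tableN := by unfold goodLeave; decide +kernel
lemma tableQ_pasch : goodPasch tableQ := by unfold goodPasch; decide +kernel
lemma tableN_pasch : goodPasch tableN := by unfold goodPasch; decide +kernel
lemma tableQ_card : (baseTriples tableQ).card = 44 := by decide +kernel
lemma tableN_card : (baseTriples tableN).card = 44 := by decide +kernel

lemma tableN_type : ∀ a b : Fin 17, Undef tableN a b → ∀ c : Fin 17, Undef tableN b c → a ≠ c →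
    ∀ d : Fin 17, Undef tableN c d → b ≠ d → third tableN a c ≠ third tableN b d := by
  decide +kernel

theorem antiPasch_mmpts17_both_types :
    (∃ B : Finset (Finset (Fin 17)), isMMPTS B ∧ isTypeQ B ∧
      ∀ P : Finset (Finset (Fin 17)), ¬ isPasch B P) ∧
    (∃ B : Finset (Finset (Fin 17)), isMMPTS B ∧ ¬ isTypeQ B ∧
      ∀ P : Finset (Finset (Fin 17)), ¬ isPasch B P) := by
  refine ⟨⟨blocks tableQ, blocks_isMMPTS tableQ_symm tableQ_card, ?_,
    blocks_antiPasch tableQ_symm tableQ_pasch⟩,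
    ⟨blocks tableN, blocks_isMMPTS tableN_symm tableN_card, ?_,
    blocks_antiPasch tableN_symm tableN_pasch⟩⟩
  · refine ⟨0, 1, 2, 3, by decide, by decide, by decide, by decide, by decide, by decide,
      leave_blocks tableQ_symm tableQ_leave, 4, ?_, ?_⟩
    · exact (mem_blocks tableQ_symm).2 ⟨0, 2, 4, by decide +kernel, rfl⟩
    · exact (mem_blocks tableQ_symm).2 ⟨1, 3, 4, by decide +kernel, rfl⟩
  · rintro ⟨a, b, c, d, ab, ac, ad, bc, bd, cd, hl, e, h1, h2⟩
    have l1 : ({a, b} : Finset (Fin 17)) ∈ leave (blocks tableN) := by rw [hl]; simp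
    have l2 : ({b, c} : Finset (Fin 17)) ∈ leave (blocks tableN) := by rw [hl]; simp
    have l3 : ({c, d} : Finset (Fin 17)) ∈ leave (blocks tableN) := by rw [hl]; simp
    rw [pair_mem_leave tableN_symm tableN_leave ab] at l1
    rw [pair_mem_leave tableN_symm tableN_leave bc] at l2
    rw [pair_mem_leave tableN_symm tableN_leave cd] at l3
    have hcard := (blocks_isPTS tableN_symm).1
    have ea : a ≠ e := by
      rintro rfl
      have := hcard _ h1
      have h3 : ({a, c, a} : Finset (Fin 17)) = {a, c} := by
        ext z; simp only [Finset.mem_insert, Finset.mem_singleton]; clear * -; tauto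
      rw [h3, Finset.card_pair ac] at this
      omega
    have ec : c ≠ e := by
      rintro rfl
      have := hcard _ h1
      have h3 : ({a, c, c} : Finset (Fin 17)) = {a, c} := by simp only [Finset.pair_eq_singleton]
      rw [h3, Finset.card_pair ac] at this
      omega
    have eb : b ≠ e := by
      rintro rfl
      have := hcard _ h2
      have h3 : ({b, d, b} : Finset (Fin 17)) = {b, d} := by
        ext z; simp only [Finset.mem_insert, Finset.mem_singleton]; clear * -; tauto
      rw [h3, Finset.card_pair bd] at this
      omega
    have ed : d ≠ e := by
      rintro rfl
      have := hcard _ h2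
      have h3 : ({b, d, d} : Finset (Fin 17)) = {b, d} := by simp only [Finset.pair_eq_singleton]
      rw [h3, Finset.card_pair bd] at this
      omega
    have r1 := rel_of_mem tableN_symm ac ea ec h1
    have r2 := rel_of_mem tableN_symm bd eb ed h2
    exact tableN_type a b ⟨ab, l1⟩ c ⟨bc, l2⟩ ac d ⟨cd, l3⟩ bd (r1.trans r2.symm)
end

section
/- Every maximum partial triple system of order 17 contains at most 4 STS(7) subsystems (Fano planes), and there exists an MMPTS(17) of Type-Q containing exactly 4 STS(7) subsystems; every Type-N MMPTS(17) contains at most 3 STS(7) subsystems. -/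
def isFano {n : ℕ} (B : Finset (Finset (Fin n))) (S : Finset (Fin n)) : Prop :=
  S.card = 7 ∧ ∀ p : Finset (Fin n), p ⊆ S → p.card = 2 →
    ∃! T : Finset (Fin n), T ∈ B ∧ T ⊆ S ∧ p ⊆ T


/-! ### Basic relations -/

/-- `{x, y, z}` is a triple of the system. -/
def Tri (B : Finset (Finset (Fin 17))) (x y z : Fin 17) : Prop :=
  ({x, y, z} : Finset (Fin 17)) ∈ B

/-- `{x, y}` is a pair of the leave. -/
def Lv (B : Finset (Finset (Fin 17))) (x y : Fin 17) : Prop :=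
  x ≠ y ∧ ∀ z, ¬ Tri B x y z

theorem Tri.swap12 {B : Finset (Finset (Fin 17))} {x y z : Fin 17} (h : Tri B x y z) :
    Tri B y x z := by
  unfold Tri at *
  rwa [Finset.insert_comm]

theorem Tri.swap23 {B : Finset (Finset (Fin 17))} {x y z : Fin 17} (h : Tri B x y z) :
    Tri B x z y := by
  unfold Tri at *
  rwa [Finset.pair_comm]

theorem Tri.rot {B : Finset (Finset (Fin 17))} {x y z : Fin 17} (h : Tri B x y z) :
    Tri B y z x := h.swap12.swap23

theorem Tri.ne {B : Finset (Finset (Fin 17))} (hB : isPTS B) {x y z : Fin 17}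
    (h : Tri B x y z) : x ≠ y ∧ x ≠ z ∧ y ≠ z := by
  have h3 := hB.1 _ h
  refine ⟨?_, ?_, ?_⟩ <;> rintro rfl
  · have := Finset.card_le_two (a := x) (b := z); simp_all
  · have := Finset.card_le_two (a := y) (b := x); simp_all [Finset.pair_comm, Finset.insert_comm]
  · have := Finset.card_le_two (a := x) (b := y); simp_all

theorem mem_unique {B : Finset (Finset (Fin 17))} (hB : isPTS B) {x y : Fin 17} (hxy : x ≠ y)
    {T U : Finset (Fin 17)} (hT : T ∈ B) (hU : U ∈ B) (h1 : x ∈ T) (h2 : y ∈ T)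
    (h3 : x ∈ U) (h4 : y ∈ U) : T = U := by
  apply hB.2 {x, y} (Finset.card_pair hxy) T hT U hU <;>
    (intro t ht; simp only [Finset.mem_insert, Finset.mem_singleton] at ht; rcases ht with rfl | rfl <;> assumption)

theorem Tri.uniq {B : Finset (Finset (Fin 17))} (hB : isPTS B) {x y z w : Fin 17}
    (h : Tri B x y z) (h' : Tri B x y w) : z = w := by
  have e := mem_unique hB (h.ne hB).1 h h' (by simp) (by simp) (by simp) (by simp)
  have : z ∈ ({x, y, w} : Finset (Fin 17)) := by rw [← e]; simp
  have n := h.ne hB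
  simp only [Finset.mem_insert, Finset.mem_singleton] at this
  grind

theorem Lv.symm {B : Finset (Finset (Fin 17))} {x y : Fin 17} (h : Lv B x y) : Lv B y x :=
  ⟨h.1.symm, fun z hz => h.2 z hz.swap12⟩

theorem exists_tri {B : Finset (Finset (Fin 17))} (hB : isPTS B) {x y : Fin 17} (hxy : x ≠ y)
    {T : Finset (Fin 17)} (hT : T ∈ B) (hx : x ∈ T) (hy : y ∈ T) : ∃ z, T = {x, y, z} := by
  have h3 := hB.1 T hT
  have h2 : ({x, y} : Finset (Fin 17)) ⊆ T := by
    intro t ht; simp only [Finset.mem_insert, Finset.mem_singleton] at ht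
    rcases ht with rfl | rfl <;> assumption
  obtain ⟨z, hz⟩ : ∃ z, T \ {x, y} = {z} := by
    rw [← Finset.card_eq_one, Finset.card_sdiff_of_subset h2, h3, Finset.card_pair hxy]
  refine ⟨z, ?_⟩
  have := Finset.sdiff_union_of_subset h2
  rw [hz] at this
  rw [← this]
  ext t; simp; tauto

open Classical in
/-- Double counting: a weight on ordered pairs is distributed over triples and the leave. -/
theorem weight_sum {B : Finset (Finset (Fin 17))} (hB : isPTS B) (w : Fin 17 → Fin 17 → ℤ)
    (hw : ∀ x, w x x = 0) :
    ∑ x, ∑ y, w x y = ∑ T ∈ B, (∑ x ∈ T, ∑ y ∈ T, w x y)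
      + ∑ x, ∑ y, (if Lv B x y then w x y else 0) := by
  have key : ∀ x y, w x y = ∑ T ∈ B, (if x ∈ T then (if y ∈ T then w x y else 0) else 0)
      + (if Lv B x y then w x y else 0) := by
    intro x y
    by_cases hxy : x = y
    · subst hxy; simp [hw]
    by_cases hl : Lv B x y
    · rw [if_pos hl, Finset.sum_eq_zero, zero_add]
      intro T hT
      by_cases hx : x ∈ T
      · by_cases hy : y ∈ T
        · obtain ⟨z, rfl⟩ := exists_tri hB hxy hT hx hy
          exact absurd hT (hl.2 z)
        · simp [hy]
      · simp [hx]
    · have : ∃ z, Tri B x y z := by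
        by_contra hc
        push Not at hc
        exact hl ⟨hxy, hc⟩
      obtain ⟨z, hz⟩ := this
      rw [if_neg hl, add_zero, Finset.sum_eq_single ({x, y, z} : Finset (Fin 17))]
      · simp
      · intro T hT hne
        by_cases hx : x ∈ T
        · by_cases hy : y ∈ T
          · exact absurd (mem_unique hB hxy hT hz hx hy (by simp) (by simp)) hne
          · simp [hy]
        · simp [hx]
      · intro h; exact absurd hz h
  have e1 : ∑ x, ∑ y, w x y = ∑ x, ∑ y, (∑ T ∈ B, (if x ∈ T then (if y ∈ T then w x y else 0) else 0)
      + (if Lv B x y then w x y else 0)) :=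
    Finset.sum_congr rfl fun x _ => Finset.sum_congr rfl fun y _ => key x y
  rw [e1]
  simp only [Finset.sum_add_distrib]
  congr 1
  have e2 : ∀ T : Finset (Fin 17), ∑ x ∈ T, ∑ y ∈ T, w x y
      = ∑ x, ∑ y, (if x ∈ T then (if y ∈ T then w x y else 0) else 0) := by
    intro T
    have e3 : ∀ x, ∑ y, (if x ∈ T then (if y ∈ T then w x y else 0) else 0)
        = if x ∈ T then ∑ y ∈ T, w x y else 0 := by
      intro x
      by_cases hx : x ∈ T
      · simp [hx]
      · simp [hx]
    simp only [e3, Finset.sum_ite_mem, Finset.univ_inter]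
  simp only [e2]
  rw [Finset.sum_comm (s := B)]
  refine Finset.sum_congr rfl fun x _ => ?_
  rw [Finset.sum_comm]

theorem sum_triple {p q r : Fin 17} (h : p ≠ q ∧ p ≠ r ∧ q ≠ r) (w : Fin 17 → Fin 17 → ℤ)
    (hw : ∀ x, w x x = 0) :
    ∑ x ∈ ({p, q, r} : Finset (Fin 17)), ∑ y ∈ ({p, q, r} : Finset (Fin 17)), w x y
      = w p q + w q p + w p r + w r p + w q r + w r q := by
  obtain ⟨h1, h2, h3⟩ := h
  have hs : ∀ f : Fin 17 → ℤ, ∑ x ∈ ({p, q, r} : Finset (Fin 17)), f x = f p + f q + f r := by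
    intro f
    rw [Finset.sum_insert (by simp [h1, h2]), Finset.sum_insert (by simp [h3]),
      Finset.sum_singleton]; ring
  simp only [hs, hw]; ring

theorem triple_form {B : Finset (Finset (Fin 17))} (hB : isPTS B) {T : Finset (Fin 17)}
    (hT : T ∈ B) : ∃ p q r, T = {p, q, r} ∧ Tri B p q r ∧ p ≠ q ∧ p ≠ r ∧ q ≠ r := by
  obtain ⟨p, q, r, h1, h2, h3, rfl⟩ := Finset.card_eq_three.mp (hB.1 T hT)
  exact ⟨p, q, r, rfl, hT, h1, h2, h3⟩


/-! ### A verified exhaustive search -/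

/-- The bits (in both orders) of a pair of labels. -/
def pbit (x y : ℕ) : ℕ := 2 ^ (17 * x + y) ||| 2 ^ (17 * y + x)

/-- The bits of a triple of labels. -/
def tbit (x y z : ℕ) : ℕ := pbit x y ||| (pbit x z ||| pbit y z)

/-- The pair is marked in the mask `m`. -/
def cov (m x y : ℕ) : Bool := Nat.testBit m (17 * x + y)

/-- Exhaustive search; `true` means that no completion exists. -/
def refute : List (ℕ × ℕ) → ℕ → Bool
  | [], _ => false
  | (x, y) :: ps, m =>
    if cov m x y then refute ps m
    else (List.range 17).all fun z =>
      z == x || (z == y || (cov m x z || (cov m y z || refute ps (m ||| tbit x y z))))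

theorem cov_or (m n x y : ℕ) : cov (m ||| n) x y = (cov m x y || cov n x y) := by
  simp [cov, Nat.testBit_or]

theorem cov_pbit {x y p q : ℕ} (hx : x < 17) (hy : y < 17) (hp : p < 17) (hq : q < 17) :
    cov (pbit x y) p q = true ↔ (x = p ∧ y = q) ∨ (x = q ∧ y = p) := by
  simp only [cov, pbit, Nat.testBit_or, Nat.testBit_two_pow, Bool.or_eq_true, decide_eq_true_eq]
  omega

/-- Labelled system: symmetric, with a unique third point. -/
structure LSys (T : ℕ → ℕ → ℕ → Prop) : Prop where
  lt : ∀ x y z, T x y z → x < 17 ∧ y < 17 ∧ z < 17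
  ne : ∀ x y z, T x y z → x ≠ y ∧ x ≠ z ∧ y ≠ z
  s12 : ∀ x y z, T x y z → T y x z
  s23 : ∀ x y z, T x y z → T x z y
  uniq : ∀ x y z w, T x y z → T x y w → z = w

/-- Marked pairs are closed under triples. -/
def MInv (T : ℕ → ℕ → ℕ → Prop) (m : ℕ) : Prop :=
  ∀ x y z, T x y z → cov m x y = true → cov m x z = true ∧ cov m y z = true

theorem MInv.zero (T : ℕ → ℕ → ℕ → Prop) : MInv T 0 := by
  intro x y z _ h; simp [cov] at h

theorem MInv.addPair {T : ℕ → ℕ → ℕ → Prop} (hT : LSys T) {m x y : ℕ} (h : MInv T m)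
    (hx : x < 17) (hy : y < 17) (hn : ∀ z, ¬ T x y z) : MInv T (m ||| pbit x y) := by
  intro p q r ht hc
  have hl := hT.lt _ _ _ ht
  rw [cov_or, Bool.or_eq_true, cov_pbit hx hy hl.1 hl.2.1] at hc
  rcases hc with hc | ⟨rfl, rfl⟩ | ⟨rfl, rfl⟩
  · have := h _ _ _ ht hc
    simp [cov_or, this]
  · exact absurd ht (hn _)
  · exact absurd (hT.s12 _ _ _ ht) (hn _)

theorem cov_tbit {x y z p q : ℕ} (hx : x < 17) (hy : y < 17) (hz : z < 17) (hp : p < 17)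
    (hq : q < 17) : cov (tbit x y z) p q = true ↔
      ((x = p ∧ y = q) ∨ (x = q ∧ y = p)) ∨ ((x = p ∧ z = q) ∨ (x = q ∧ z = p)) ∨
      ((y = p ∧ z = q) ∨ (y = q ∧ z = p)) := by
  simp only [tbit, cov_or, Bool.or_eq_true, cov_pbit hx hy hp hq, cov_pbit hx hz hp hq,
    cov_pbit hy hz hp hq]

theorem MInv.addTri {T : ℕ → ℕ → ℕ → Prop} (hT : LSys T) {m x y z : ℕ} (h : MInv T m)
    (ht : T x y z) : MInv T (m ||| tbit x y z) := by
  intro p q r hpq hc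
  have hl := hT.lt _ _ _ hpq
  have hl' := hT.lt _ _ _ ht
  rw [cov_or, Bool.or_eq_true, cov_tbit hl'.1 hl'.2.1 hl'.2.2 hl.1 hl.2.1] at hc
  rw [cov_or, cov_or, Bool.or_eq_true, Bool.or_eq_true,
    cov_tbit hl'.1 hl'.2.1 hl'.2.2 hl.1 hl.2.2, cov_tbit hl'.1 hl'.2.1 hl'.2.2 hl.2.1 hl.2.2]
  have s1 := hT.s12 _ _ _ hpq
  have t1 := hT.s23 _ _ _ ht
  have t2 := hT.s23 _ _ _ (hT.s12 _ _ _ ht)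
  rcases hc with hc | (⟨rfl, rfl⟩ | ⟨rfl, rfl⟩) | (⟨rfl, rfl⟩ | ⟨rfl, rfl⟩) | (⟨rfl, rfl⟩ | ⟨rfl, rfl⟩)
  · have := h _ _ _ hpq hc
    exact ⟨Or.inl this.1, Or.inl this.2⟩
  · obtain rfl := hT.uniq _ _ _ _ ht hpq; simp
  · obtain rfl := hT.uniq _ _ _ _ ht s1; simp
  · obtain rfl := hT.uniq _ _ _ _ t1 hpq; simp
  · obtain rfl := hT.uniq _ _ _ _ t1 s1; simp
  · obtain rfl := hT.uniq _ _ _ _ t2 hpq; simp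
  · obtain rfl := hT.uniq _ _ _ _ t2 s1; simp

theorem refute_sound {T : ℕ → ℕ → ℕ → Prop} (hT : LSys T) :
    ∀ (ps : List (ℕ × ℕ)) (m : ℕ), (∀ p ∈ ps, p.1 < 17 ∧ p.2 < 17 ∧ p.1 ≠ p.2) → MInv T m →
      (∀ x y, x < 17 → y < 17 → x ≠ y → cov m x y = false → ∃ z, T x y z) →
      refute ps m = true → False := by
  intro ps
  induction ps with
  | nil => intro m _ _ _ h; simp [refute] at h
  | cons p ps ih =>
    obtain ⟨x, y⟩ := p
    intro m hps hm htot h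
    have hps' : ∀ p ∈ ps, p.1 < 17 ∧ p.2 < 17 ∧ p.1 ≠ p.2 :=
      fun p hp => hps p (List.mem_cons_of_mem _ hp)
    have hxy := hps (x, y) (by simp)
    simp only at hxy
    rw [refute] at h
    by_cases hc : cov m x y = true
    · rw [if_pos hc] at h
      exact ih m hps' hm htot h
    · rw [if_neg hc] at h
      obtain ⟨z, hz⟩ := htot x y hxy.1 hxy.2.1 hxy.2.2 (by simpa using hc)
      have hl := hT.lt _ _ _ hz
      have hn := hT.ne _ _ _ hz
      rw [List.all_eq_true] at h
      have h' := h z (List.mem_range.mpr hl.2.2)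
      simp only [Bool.or_eq_true, beq_iff_eq] at h'
      rcases h' with h' | h' | h' | h' | h'
      · exact hn.2.1 h'.symm
      · exact hn.2.2 h'.symm
      · exact hc (hm _ _ _ (hT.s23 _ _ _ hz) h').1
      · have r1 := hT.s23 _ _ _ (hT.s12 _ _ _ hz)
        have r2 := hT.s23 _ _ _ (hT.s12 _ _ _ r1)
        exact hc (hm _ _ _ r2 (hm _ _ _ r1 h').2).2
      · refine ih _ hps' (hm.addTri hT hz) ?_ h'
        intro p q hp hq hpq hcov
        rw [cov_or, Bool.or_eq_false_iff] at hcov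
        exact htot p q hp hq hpq hcov.1

/-- Order of the pairs examined by the search. -/
def searchPairs : List (ℕ × ℕ) :=
  [(14, 0), (13, 1), (14, 13), (13, 8), (8, 5), (14, 8), (14, 1), (16, 8), (8, 6), (12, 9),
   (9, 6), (15, 9), (16, 9), (9, 4), (7, 6), (14, 7), (12, 0), (15, 7), (14, 5), (14, 4),
   (14, 3), (15, 3), (10, 3), (16, 3), (16, 7), (15, 5), (14, 9), (16, 5), (14, 10), (15, 6),
   (16, 6), (10, 5), (14, 6), (11, 6), (11, 10), (12, 5), (12, 10), (10, 6), (15, 14), (13, 10),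
   (13, 4), (15, 10), (10, 4)]

/-- The triples known at the start of the search. -/
def startTriples : List (ℕ × ℕ × ℕ) :=
  [(0, 1, 2), (1, 3, 4), (1, 5, 6), (0, 3, 5), (0, 4, 6), (2, 3, 6), (2, 4, 5), (1, 7, 8),
   (1, 9, 10), (0, 7, 9), (0, 8, 10), (2, 7, 10), (2, 8, 9), (1, 11, 12), (3, 7, 11), (3, 8, 12),
   (4, 7, 12), (4, 8, 11), (0, 11, 13), (3, 9, 13), (5, 7, 13), (5, 9, 11)]

/-- The mask of the leave `0 15 1 16`. -/
def leaveMask : ℕ := ((pbit 0 15 ||| pbit 1 15) ||| pbit 1 16) ||| pbit 0 16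

def startMask : ℕ := startTriples.foldl (fun m t => m ||| tbit t.1 t.2.1 t.2.2) leaveMask

set_option maxRecDepth 100000 in
theorem refute_start : refute searchPairs startMask = true := by
  decide +kernel

theorem fold_inv {T : ℕ → ℕ → ℕ → Prop} (hT : LSys T) : ∀ (l : List (ℕ × ℕ × ℕ)) (m : ℕ),
    (∀ t ∈ l, T t.1 t.2.1 t.2.2) → MInv T m →
    MInv T (l.foldl (fun m t => m ||| tbit t.1 t.2.1 t.2.2) m) := by
  intro l
  induction l with
  | nil => intro m _ h; exact h
  | cons t l ih =>
    intro m hl hm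
    exact ih _ (fun s hs => hl s (List.mem_cons_of_mem _ hs)) (hm.addTri hT (hl t (by simp)))

theorem fold_cov (x y : ℕ) : ∀ (l : List (ℕ × ℕ × ℕ)) (m : ℕ),
    cov (l.foldl (fun m t => m ||| tbit t.1 t.2.1 t.2.2) m) x y = false → cov m x y = false := by
  intro l
  induction l with
  | nil => intro m h; exact h
  | cons t l ih =>
    intro m h
    have := ih _ h
    rw [cov_or, Bool.or_eq_false_iff] at this
    exact this.1

theorem no_labelled {T : ℕ → ℕ → ℕ → Prop} (hT : LSys T)
    (h1 : ∀ z, ¬ T 0 15 z) (h2 : ∀ z, ¬ T 1 15 z) (h3 : ∀ z, ¬ T 1 16 z) (h4 : ∀ z, ¬ T 0 16 z)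
    (htot : ∀ x y, x < 17 → y < 17 → x ≠ y → cov leaveMask x y = false → ∃ z, T x y z)
    (hs : ∀ t ∈ startTriples, T t.1 t.2.1 t.2.2) : False := by
  refine refute_sound hT searchPairs startMask (by decide) ?_ ?_ refute_start
  · apply fold_inv hT _ _ hs
    unfold leaveMask pbit
    have := (((((MInv.zero T).addPair hT (by norm_num) (by norm_num) h1).addPair hT
      (by norm_num) (by norm_num) h2).addPair hT
      (by norm_num) (by norm_num) h3).addPair hT (by norm_num) (by norm_num) h4)
    simpa only [pbit, Nat.zero_or] using this
  · intro x y hx hy hxy hc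
    exact htot x y hx hy hxy (fold_cov x y _ _ hc)


/-! ### The leave of a maximum system -/

/-- The leave is the 4-cycle `a b c d`. -/
structure Cyc (B : Finset (Finset (Fin 17))) (a b c d : Fin 17) : Prop where
  ab : a ≠ b
  ac : a ≠ c
  ad : a ≠ d
  bc : b ≠ c
  bd : b ≠ d
  cd : c ≠ d
  lv : ∀ x y, Lv B x y ↔ (x = a ∧ y = b) ∨ (x = b ∧ y = a) ∨ (x = b ∧ y = c) ∨ (x = c ∧ y = b) ∨
    (x = c ∧ y = d) ∨ (x = d ∧ y = c) ∨ (x = d ∧ y = a) ∨ (x = a ∧ y = d)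

theorem Cyc.rot {B : Finset (Finset (Fin 17))} {a b c d : Fin 17} (h : Cyc B a b c d) :
    Cyc B b c d a where
  ab := h.bc
  ac := h.bd
  ad := h.ab.symm
  bc := h.cd
  bd := h.ac.symm
  cd := h.ad.symm
  lv := by intro x y; rw [h.lv]; tauto

open Classical in
/-- Neighbours in the leave. -/
noncomputable def nb (B : Finset (Finset (Fin 17))) (v : Fin 17) : Finset (Fin 17) :=
  Finset.univ.filter fun y => Lv B v y

theorem mem_nb {B : Finset (Finset (Fin 17))} {v y : Fin 17} : y ∈ nb B v ↔ Lv B v y := by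
  simp [nb]

theorem nb_even {B : Finset (Finset (Fin 17))} (hB : isPTS B) (v : Fin 17) :
    Even (nb B v).card := by
  classical
  have h := weight_sum hB (fun x y => if x = v ∧ y ≠ v then 1 else 0) (by intro x; simp)
  have e1 : ∑ x : Fin 17, ∑ y : Fin 17, (if x = v ∧ y ≠ v then (1 : ℤ) else 0) = 16 := by
    rw [Finset.sum_eq_single v]
    · simp only [true_and]
      rw [Finset.sum_ite]
      simp [Finset.filter_ne']
    · intro x _ hx; simp [hx]
    · simp
  have e2 : ∑ x : Fin 17, ∑ y : Fin 17, (if Lv B x y then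
      (if x = v ∧ y ≠ v then (1 : ℤ) else 0) else 0) = (nb B v).card := by
    rw [Finset.sum_eq_single v]
    · simp only [true_and, nb, Finset.card_filter]
      push_cast
      refine Finset.sum_congr rfl fun y _ => ?_
      by_cases hl : Lv B v y
      · simp [hl, hl.1.symm]
      · simp [hl]
    · intro x _ hx; simp [hx]
    · simp
  have e3 : ∀ T ∈ B, (2 : ℤ) ∣ ∑ x ∈ T, ∑ y ∈ T, (if x = v ∧ y ≠ v then (1 : ℤ) else 0) := by
    intro T hT
    obtain ⟨p, q, r, rfl, -, hne⟩ := triple_form hB hT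
    rw [sum_triple hne _ (by intro x; simp)]
    obtain ⟨h1, h2, h3⟩ := hne
    by_cases a1 : p = v
    · subst a1; simp [h1.symm, h2.symm]
    by_cases a2 : q = v
    · subst a2; simp [h1, h3.symm]
    by_cases a3 : r = v
    · subst a3; simp [h2, h3]
    simp [a1, a2, a3]
  obtain ⟨k, hk⟩ := Finset.dvd_sum e3
  rw [e1, e2, hk] at h
  have : (2 : ℤ) ∣ (nb B v).card := ⟨8 - k, by linarith⟩
  exact even_iff_two_dvd.mpr (by exact_mod_cast this)

theorem nb_sum {B : Finset (Finset (Fin 17))} (hB : isPTS B) :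
    6 * B.card + ∑ v, (nb B v).card = 272 := by
  classical
  have h := weight_sum hB (fun x y => if x ≠ y then 1 else 0) (by intro x; simp)
  have e1 : ∑ x : Fin 17, ∑ y : Fin 17, (if x ≠ y then (1 : ℤ) else 0) = 272 := by decide
  have e2 : ∑ x : Fin 17, ∑ y : Fin 17, (if Lv B x y then
      (if x ≠ y then (1 : ℤ) else 0) else 0) = ∑ v, ((nb B v).card : ℤ) := by
    refine Finset.sum_congr rfl fun v _ => ?_
    simp only [nb, Finset.card_filter]
    push_cast
    refine Finset.sum_congr rfl fun y _ => ?_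
    by_cases hl : Lv B v y
    · simp [hl, hl.1]
    · simp [hl]
  have e3 : ∑ T ∈ B, ∑ x ∈ T, ∑ y ∈ T, (if x ≠ y then (1 : ℤ) else 0) = 6 * B.card := by
    rw [Finset.sum_congr rfl (g := fun _ => (6 : ℤ))]
    · simp; ring
    intro T hT
    obtain ⟨p, q, r, rfl, -, hne⟩ := triple_form hB hT
    rw [sum_triple hne _ (by intro x; simp)]
    obtain ⟨h1, h2, h3⟩ := hne
    simp [h1, h2, h3, h1.symm, h2.symm, h3.symm]
  rw [e1, e2, e3] at h
  have : ((6 * B.card + ∑ v, (nb B v).card : ℕ) : ℤ) = 272 := by push_cast; linarith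
  exact_mod_cast this

theorem nb_two {B : Finset (Finset (Fin 17))} (hB : isPTS B) {v y : Fin 17} (h : y ∈ nb B v) :
    2 ≤ (nb B v).card := by
  obtain ⟨k, hk⟩ := nb_even hB v
  have := Finset.card_pos.mpr ⟨y, h⟩
  omega

theorem card_le_44 {B : Finset (Finset (Fin 17))} (hB : isPTS B) : B.card ≤ 44 := by
  by_contra hc
  have hs := nb_sum hB
  have h2 : ∑ v, (nb B v).card = 2 := by omega
  obtain ⟨v, -, hv⟩ : ∃ v ∈ Finset.univ, (nb B v).card ≠ 0 := by
    apply Finset.exists_ne_zero_of_sum_ne_zero; omega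
  obtain ⟨u, hu⟩ := Finset.card_pos.mp (Nat.pos_of_ne_zero hv)
  have huv : v ∈ nb B u := mem_nb.mpr (mem_nb.mp hu).symm
  have hne : v ≠ u := (mem_nb.mp hu).1
  have a1 := nb_two hB hu
  have a2 := nb_two hB huv
  have a3 : ∑ x ∈ ({v, u} : Finset (Fin 17)), (nb B x).card ≤ ∑ x, (nb B x).card :=
    Finset.sum_le_sum_of_subset (Finset.subset_univ _)
  rw [Finset.sum_pair hne] at a3
  omega

set_option maxHeartbeats 1000000 in
theorem exists_cyc {B : Finset (Finset (Fin 17))} (hB : isPTS B) (h44 : B.card = 44) :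
    ∃ a b c d, Cyc B a b c d := by
  classical
  have hs := nb_sum hB
  have h8 : ∑ v, (nb B v).card = 8 := by omega
  set N : Finset (Fin 17) := Finset.univ.filter fun v => (nb B v).card ≠ 0 with hN
  have hNs : ∑ v ∈ N, (nb B v).card = 8 := by
    rw [hN, Finset.sum_filter_ne_zero]; exact h8
  have memN : ∀ {v u}, u ∈ nb B v → v ∈ N := by
    intro v u h
    simp only [hN, Finset.mem_filter, Finset.mem_univ, true_and]
    exact (Finset.card_pos.mpr ⟨u, h⟩).ne'
  have sy : ∀ {v u}, u ∈ nb B v → v ∈ nb B u := fun h => mem_nb.mpr (mem_nb.mp h).symm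
  have ge2 : ∀ v ∈ N, 2 ≤ (nb B v).card := by
    intro v hv
    simp only [hN, Finset.mem_filter, Finset.mem_univ, true_and] at hv
    obtain ⟨u, hu⟩ := Finset.card_pos.mp (Nat.pos_of_ne_zero hv)
    exact nb_two hB hu
  have hN4 : N.card ≤ 4 := by
    have := Finset.card_nsmul_le_sum N _ 2 ge2
    rw [hNs, smul_eq_mul] at this
    omega
  have sub : ∀ v ∈ N, nb B v ⊆ N.erase v := by
    intro v _ u hu
    exact Finset.mem_erase.mpr ⟨(mem_nb.mp hu).1.symm, memN (sy hu)⟩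
  have eq2 : ∀ v ∈ N, (nb B v).card = 2 := by
    intro v hv
    have h1 := Finset.card_le_card (sub v hv)
    rw [Finset.card_erase_of_mem hv] at h1
    have h2 := ge2 v hv
    obtain ⟨k, hk⟩ := nb_even hB v
    omega
  have hN4' : N.card = 4 := by
    rw [Finset.sum_congr rfl eq2] at hNs
    simp at hNs; omega
  obtain ⟨a, ha⟩ := Finset.card_pos.mp (show 0 < N.card by omega)
  obtain ⟨b, d, hbd, hab⟩ := Finset.card_eq_two.mp (eq2 a ha)
  have hba : b ∈ nb B a := by rw [hab]; simp
  have hda : d ∈ nb B a := by rw [hab]; simp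
  have hbN := memN (sy hba)
  have hdN := memN (sy hda)
  have nab := (mem_nb.mp hba).1
  have nad := (mem_nb.mp hda).1
  obtain ⟨c, hc⟩ : ∃ c, N \ {a, b, d} = {c} := by
    rw [← Finset.card_eq_one, Finset.card_sdiff_of_subset, hN4', Finset.card_eq_three.mpr]
    · exact ⟨a, b, d, nab, nad, hbd, rfl⟩
    · intro t; simp only [Finset.mem_insert, Finset.mem_singleton]; grind
  have hcN : ∀ x, x ∈ N ↔ x = a ∨ x = b ∨ x = c ∨ x = d := by
    intro x
    have := Finset.ext_iff.mp hc x
    simp only [Finset.mem_sdiff, Finset.mem_insert, Finset.mem_singleton] at this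
    grind
  have hc' := (Finset.ext_iff.mp hc c)
  simp only [Finset.mem_sdiff, Finset.mem_insert, Finset.mem_singleton, iff_true, not_or] at hc'
  obtain ⟨hcN', nca, ncb, ncd⟩ := hc'
  -- the neighbours of `c`
  have hcb : nb B c = {b, d} := by
    apply Finset.eq_of_subset_of_card_le
    · intro t ht
      have h1 := sub c hcN' ht
      rw [Finset.mem_erase, hcN] at h1
      have h2 : t ≠ a := by
        rintro rfl
        have := sy ht
        rw [hab] at this; simp at this
        rcases this with h | h <;> [exact ncb h; exact ncd h]
      simp only [Finset.mem_insert, Finset.mem_singleton]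
      rcases h1.2 with h | h | h | h
      · exact absurd h h2
      · exact Or.inl h
      · exact absurd h h1.1
      · exact Or.inr h
    · rw [eq2 c hcN', Finset.card_pair hbd]
  have hcb' : b ∈ nb B c := by rw [hcb]; simp
  have hcd' : d ∈ nb B c := by rw [hcb]; simp
  have hb : nb B b = {a, c} := by
    symm
    apply Finset.eq_of_subset_of_card_le
    · intro t ht; simp at ht; rcases ht with rfl | rfl
      · exact sy hba
      · exact sy hcb'
    · rw [eq2 b hbN, Finset.card_pair (Ne.symm nca)]
  have hd : nb B d = {a, c} := by
    symm
    apply Finset.eq_of_subset_of_card_le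
    · intro t ht; simp at ht; rcases ht with rfl | rfl
      · exact sy hda
      · exact sy hcd'
    · rw [eq2 d hdN, Finset.card_pair (Ne.symm nca)]
  refine ⟨a, b, c, d, nab, Ne.symm nca, nad, Ne.symm ncb, hbd, ncd, ?_⟩
  intro x y
  rw [← mem_nb]
  constructor
  · intro h
    rcases (hcN x).mp (memN h) with rfl | rfl | rfl | rfl
    · rw [hab] at h; simp at h; rcases h with rfl | rfl <;> simp
    · rw [hb] at h; simp at h; rcases h with rfl | rfl <;> simp
    · rw [hcb] at h; simp at h; rcases h with rfl | rfl <;> simp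
    · rw [hd] at h; simp at h; rcases h with rfl | rfl <;> simp
  · rintro (⟨rfl, rfl⟩ | ⟨rfl, rfl⟩ | ⟨rfl, rfl⟩ | ⟨rfl, rfl⟩ | ⟨rfl, rfl⟩ | ⟨rfl, rfl⟩ | ⟨rfl, rfl⟩ | ⟨rfl, rfl⟩)
    · exact hba
    · exact sy hba
    · exact sy hcb'
    · exact hcb'
    · exact hcd'
    · exact sy hcd'
    · exact sy hda
    · exact hda


/-! ### Intersections of Fano planes -/

structure Fan (B : Finset (Finset (Fin 17))) (S : Finset (Fin 17)) : Prop where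
  card : S.card = 7
  cl : ∀ x ∈ S, ∀ y ∈ S, x ≠ y → ∃ z ∈ S, Tri B x y z

theorem isFano.fan {B : Finset (Finset (Fin 17))} (hB : isPTS B) {S : Finset (Fin 17)}
    (h : isFano B S) : Fan B S := by
  refine ⟨h.1, fun x hx y hy hxy => ?_⟩
  obtain ⟨T, ⟨hT, hTS, hp⟩, -⟩ := h.2 {x, y}
    (by intro t ht; simp only [Finset.mem_insert, Finset.mem_singleton] at ht
        rcases ht with rfl | rfl <;> assumption) (Finset.card_pair hxy)
  obtain ⟨z, rfl⟩ := exists_tri hB hxy hT (hp (by simp)) (hp (by simp))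
  exact ⟨z, hTS (by simp), hT⟩

theorem Fan.isFano {B : Finset (Finset (Fin 17))} (hB : isPTS B) {S : Finset (Fin 17)}
    (h : Fan B S) : isFano B S := by
  refine ⟨h.card, fun p hp hc => ?_⟩
  obtain ⟨x, y, hxy, rfl⟩ := Finset.card_eq_two.mp hc
  obtain ⟨z, hz, hT⟩ := h.cl x (hp (by simp)) y (hp (by simp)) hxy
  refine ⟨{x, y, z}, ⟨hT, ?_, ?_⟩, ?_⟩
  · intro t ht
    simp only [Finset.mem_insert, Finset.mem_singleton] at ht
    rcases ht with rfl | rfl | rfl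
    · exact hp (by simp)
    · exact hp (by simp)
    · exact hz
  · intro t ht
    simp only [Finset.mem_insert, Finset.mem_singleton] at ht ⊢
    tauto
  · rintro U ⟨hU, -, hpU⟩
    exact mem_unique hB hxy hU hT (hpU (by simp)) (hpU (by simp)) (by simp) (by simp)

theorem Fan.third {B : Finset (Finset (Fin 17))} (hB : isPTS B) {S : Finset (Fin 17)}
    (h : Fan B S) {x y z : Fin 17} (ht : Tri B x y z) (hx : x ∈ S) (hy : y ∈ S) : z ∈ S := by
  obtain ⟨w, hw, hT⟩ := h.cl x hx y hy (ht.ne hB).1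
  rwa [ht.uniq hB hT]

open Classical in
theorem leave_sum {B : Finset (Finset (Fin 17))} {a b c d : Fin 17} (h : Cyc B a b c d)
    (w : Fin 17 → Fin 17 → ℤ) :
    ∑ x, ∑ y, (if Lv B x y then w x y else 0) =
      w a b + w b a + w b c + w c b + w c d + w d c + w d a + w a d := by
  obtain ⟨ab, ac, ad, bc, bd, cd, lv⟩ := h
  have e : ∀ x y, (if Lv B x y then w x y else 0) =
      (if x = a then if y = b then w a b else 0 else 0) +
      (if x = b then if y = a then w b a else 0 else 0) +
      (if x = b then if y = c then w b c else 0 else 0) +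
      (if x = c then if y = b then w c b else 0 else 0) +
      (if x = c then if y = d then w c d else 0 else 0) +
      (if x = d then if y = c then w d c else 0 else 0) +
      (if x = d then if y = a then w d a else 0 else 0) +
      (if x = a then if y = d then w a d else 0 else 0) := by
    intro x y
    simp only [lv]
    clear lv
    by_cases h1 : x = a
    · subst h1
      by_cases k1 : y = b
      · subst k1; simp [*]
      by_cases k2 : y = d
      · subst k2; simp [*]
      simp [*]
    by_cases h2 : x = b
    · subst h2
      by_cases k1 : y = a
      · subst k1; simp [*]
      by_cases k2 : y = c
      · subst k2; simp [*]
      simp [*]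
    by_cases h3 : x = c
    · subst h3
      by_cases k1 : y = b
      · subst k1; simp [*]
      by_cases k2 : y = d
      · subst k2; simp [*]
      simp [*]
    by_cases h4 : x = d
    · subst h4
      by_cases k1 : y = a
      · subst k1; simp [*]
      by_cases k2 : y = c
      · subst k2; simp [*]
      simp [*]
    simp [*]
  simp only [e, Finset.sum_add_distrib]
  have e2 : ∀ p q : Fin 17, ∀ k : ℤ,
      ∑ x : Fin 17, ∑ y : Fin 17, (if x = p then if y = q then k else 0 else 0) = k := by
    intro p q k
    rw [Finset.sum_eq_single p] <;> simp
    intro x hx; simp [hx]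
  simp only [e2]

/-- Indicator of a set. -/
def ind (S : Finset (Fin 17)) (x : Fin 17) : ℤ := if x ∈ S then 1 else 0

theorem sum_ind (S : Finset (Fin 17)) : ∑ x, ind S x = S.card := by simp [ind]

/-- The weight with value `2` on `A × B`, `-1` between `W` and `R`, `κ` inside `R`. -/
def wt (κ : ℤ) (A C R : Finset (Fin 17)) (x y : Fin 17) : ℤ :=
  2 * (ind A x * ind C y + ind C x * ind A y)
    - (ind R x * (1 - ind R y) + (1 - ind R x) * ind R y) + κ * (ind R x * ind R y)
    - (if x = y then κ * ind R x else 0)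

theorem wt_diag (κ : ℤ) {A C R : Finset (Fin 17)} (hAC : Disjoint A C) (x : Fin 17) :
    wt κ A C R x x = 0 := by
  have : ¬ (x ∈ A ∧ x ∈ C) := fun h => Finset.disjoint_left.mp hAC h.1 h.2
  by_cases h1 : x ∈ A <;> by_cases h2 : x ∈ C <;> by_cases h3 : x ∈ R <;>
    simp_all [wt, ind]

theorem wt_sum (κ : ℤ) (A C R : Finset (Fin 17)) :
    ∑ x, ∑ y, wt κ A C R x y = 4 * (A.card * C.card) - 2 * (R.card * (17 - R.card))
      + κ * (R.card * R.card) - κ * R.card := by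
  have e : ∀ x y, wt κ A C R x y = 2 * (ind A x * ind C y) + 2 * (ind C x * ind A y)
    - ind R x * ind Finset.univ y - ind Finset.univ x * ind R y + (κ + 2) * (ind R x * ind R y)
    - (if x = y then κ * ind R x else 0) := by
    intro x y; simp only [wt]; simp only [ind, Finset.mem_univ, if_true]; ring
  simp only [e, Finset.sum_add_distrib, Finset.sum_sub_distrib, ← Finset.mul_sum]
  simp only [Finset.sum_ite_eq, Finset.mem_univ, if_true, ← Finset.mul_sum, ← Finset.sum_mul,
    sum_ind, Finset.card_univ, Fintype.card_fin]
  push_cast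
  ring

section pair

variable {B : Finset (Finset (Fin 17))} {S T : Finset (Fin 17)}

theorem wt_triple (hB : isPTS B) (hS : Fan B S) (hT : Fan B T) {X : Finset (Fin 17)}
    (hX : X ∈ B) (κ : ℤ) (hκ : κ = 0 ∨ κ = 2) :
    (κ = 2 → 0 ≤ ∑ x ∈ X, ∑ y ∈ X, wt κ (S \ T) (T \ S) (S ∪ T)ᶜ x y) ∧
    (κ = 0 → ∑ x ∈ X, ∑ y ∈ X, wt κ (S \ T) (T \ S) (S ∪ T)ᶜ x y ≤ 0) := by
  obtain ⟨p, q, r, rfl, ht, hne⟩ := triple_form hB hX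
  rw [sum_triple hne _ (wt_diag κ (by rw [Finset.disjoint_left]; simp; tauto))]
  have s1 := fun h1 h2 => hS.third hB ht h1 h2
  have s2 := fun h1 h2 => hS.third hB ht.swap23 h1 h2
  have s3 := fun h1 h2 => hS.third hB ht.rot h1 h2
  have t1 := fun h1 h2 => hT.third hB ht h1 h2
  have t2 := fun h1 h2 => hT.third hB ht.swap23 h1 h2
  have t3 := fun h1 h2 => hT.third hB ht.rot h1 h2
  obtain ⟨h1, h2, h3⟩ := hne
  simp only [wt, ind, Finset.mem_sdiff, Finset.mem_compl, Finset.mem_union, h1, h2, h3, h1.symm,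
    h2.symm, h3.symm, if_false]
  clear ht hX hB hS hT
  by_cases a1 : p ∈ S <;> by_cases a2 : q ∈ S <;> by_cases a3 : r ∈ S <;>
  by_cases b1 : p ∈ T <;> by_cases b2 : q ∈ T <;> by_cases b3 : r ∈ T <;>
  first
    | exact absurd (s1 a1 a2) a3
    | exact absurd (s2 a1 a3) a2
    | exact absurd (s3 a2 a3) a1
    | exact absurd (t1 b1 b2) b3
    | exact absurd (t2 b1 b3) b2
    | exact absurd (t3 b2 b3) b1
    | (simp only [a1, a2, a3, b1, b2, b3]; rcases hκ with rfl | rfl <;> norm_num)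

theorem wt_bounds (κ : ℤ) (hκ : κ = 0 ∨ κ = 2) (x y : Fin 17) (hxy : x ≠ y) :
    -1 ≤ wt κ (S \ T) (T \ S) (S ∪ T)ᶜ x y ∧ wt κ (S \ T) (T \ S) (S ∪ T)ᶜ x y ≤ 2 ∧
    (κ = 2 → wt κ (S \ T) (T \ S) (S ∪ T)ᶜ x y ≤ -1 →
      ((x ∈ S ∪ T ∧ y ∉ S ∪ T) ∨ (x ∉ S ∪ T ∧ y ∈ S ∪ T))) := by
  simp only [wt, ind, Finset.mem_sdiff, Finset.mem_compl, Finset.mem_union, hxy, if_false]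
  by_cases a1 : x ∈ S <;> by_cases a2 : y ∈ S <;>
  by_cases b1 : x ∈ T <;> by_cases b2 : y ∈ T <;>
    (simp only [a1, a2, b1, b2]; rcases hκ with rfl | rfl <;> norm_num)

set_option maxHeartbeats 1000000 in
theorem Fan.inter {a b c d : Fin 17} (hB : isPTS B) (hC : Cyc B a b c d) (hS : Fan B S)
    (hT : Fan B T) (hne : S ≠ T) :
    (S ∩ T).card = 3 ∧
    ((a ∈ S ∪ T ∧ c ∈ S ∪ T ∧ b ∉ S ∪ T ∧ d ∉ S ∪ T) ∨
     (b ∈ S ∪ T ∧ d ∈ S ∪ T ∧ a ∉ S ∪ T ∧ c ∉ S ∪ T)) := by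
  have hdis : Disjoint (S \ T) (T \ S) := by rw [Finset.disjoint_left]; simp; tauto
  have c1 : (S \ T).card + (S ∩ T).card = 7 := by rw [Finset.card_sdiff_add_card_inter, hS.card]
  have c2 : (T \ S).card + (S ∩ T).card = 7 := by
    rw [Finset.inter_comm, Finset.card_sdiff_add_card_inter, hT.card]
  have c3 : (S ∪ T)ᶜ.card = 3 + (S ∩ T).card := by
    have := Finset.card_union_add_card_inter S T
    rw [Finset.card_compl, Fintype.card_fin]
    rw [hS.card, hT.card] at this
    omega
  have main : ∀ κ : ℤ, 4 * (((S \ T).card : ℤ) * (T \ S).card)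
      - 2 * (((S ∪ T)ᶜ.card : ℤ) * (17 - (S ∪ T)ᶜ.card))
      + κ * (((S ∪ T)ᶜ.card : ℤ) * (S ∪ T)ᶜ.card) - κ * (S ∪ T)ᶜ.card =
      ∑ X ∈ B, (∑ x ∈ X, ∑ y ∈ X, wt κ (S \ T) (T \ S) (S ∪ T)ᶜ x y) +
      (wt κ (S \ T) (T \ S) (S ∪ T)ᶜ a b + wt κ (S \ T) (T \ S) (S ∪ T)ᶜ b a
      + wt κ (S \ T) (T \ S) (S ∪ T)ᶜ b c + wt κ (S \ T) (T \ S) (S ∪ T)ᶜ c b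
      + wt κ (S \ T) (T \ S) (S ∪ T)ᶜ c d + wt κ (S \ T) (T \ S) (S ∪ T)ᶜ d c
      + wt κ (S \ T) (T \ S) (S ∪ T)ᶜ d a + wt κ (S \ T) (T \ S) (S ∪ T)ᶜ a d) := by
    intro κ
    rw [← leave_sum hC, ← weight_sum hB _ (wt_diag κ hdis), wt_sum]
  have m2 := main 2
  have m0 := main 0
  have p2 : 0 ≤ ∑ X ∈ B, ∑ x ∈ X, ∑ y ∈ X, wt 2 (S \ T) (T \ S) (S ∪ T)ᶜ x y :=
    Finset.sum_nonneg fun X hX => (wt_triple hB hS hT hX 2 (Or.inr rfl)).1 rfl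
  have p0 : ∑ X ∈ B, ∑ x ∈ X, ∑ y ∈ X, wt 0 (S \ T) (T \ S) (S ∪ T)ᶜ x y ≤ 0 :=
    Finset.sum_nonpos fun X hX => (wt_triple hB hS hT hX 0 (Or.inl rfl)).2 rfl
  clear main
  have q := fun (x y : Fin 17) (h : x ≠ y) => wt_bounds (S := S) (T := T) 2 (Or.inr rfl) x y h
  have q0 := fun (x y : Fin 17) (h : x ≠ y) => (wt_bounds (S := S) (T := T) 0 (Or.inl rfl) x y h).2.1
  have r1 := q a b hC.ab
  have r2 := q b a hC.ab.symm
  have r3 := q b c hC.bc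
  have r4 := q c b hC.bc.symm
  have r5 := q c d hC.cd
  have r6 := q d c hC.cd.symm
  have r7 := q d a hC.ad.symm
  have r8 := q a d hC.ad
  have u1 := q0 a b hC.ab
  have u2 := q0 b a hC.ab.symm
  have u3 := q0 b c hC.bc
  have u4 := q0 c b hC.bc.symm
  have u5 := q0 c d hC.cd
  have u6 := q0 d c hC.cd.symm
  have u7 := q0 d a hC.ad.symm
  have u8 := q0 a d hC.ad
  generalize (∑ X ∈ B, ∑ x ∈ X, ∑ y ∈ X, wt 2 (S \ T) (T \ S) (S ∪ T)ᶜ x y) = P2 at *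
  generalize (∑ X ∈ B, ∑ x ∈ X, ∑ y ∈ X, wt 0 (S \ T) (T \ S) (S ∪ T)ᶜ x y) = P0 at *
  have hk : (S ∩ T).card = 3 := by
    obtain ⟨k, hk⟩ : ∃ k, (S ∩ T).card = k := ⟨_, rfl⟩
    have hk7 : k ≤ 7 := by omega
    have d1 : (S \ T).card = 7 - k := by omega
    have d2 : (T \ S).card = 7 - k := by omega
    rw [hk] at c3
    rw [d1, d2, c3] at m2 m0
    rw [hk]
    interval_cases k
    · norm_num [-Finset.compl_union] at m0; omega
    · norm_num [-Finset.compl_union] at m0; omega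
    · exfalso
      obtain ⟨p, q, hpq, he⟩ := Finset.card_eq_two.mp hk
      have hp : p ∈ S ∩ T := by rw [he]; simp
      have hq : q ∈ S ∩ T := by rw [he]; simp
      rw [Finset.mem_inter] at hp hq
      obtain ⟨z, hz, ht⟩ := hS.cl p hp.1 q hq.1 hpq
      have hz2 : z ∈ S ∩ T := Finset.mem_inter.mpr ⟨hz, hT.third hB ht hp.2 hq.2⟩
      rw [he] at hz2
      have := ht.ne hB
      simp at hz2
      rcases hz2 with rfl | rfl <;> simp_all
    · rfl
    · norm_num [-Finset.compl_union] at m2; omega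
    · norm_num [-Finset.compl_union] at m2; omega
    · exfalso
      obtain ⟨s, hs⟩ := Finset.card_eq_one.mp d1
      have hs' : s ∈ S \ T := by rw [hs]; simp
      rw [Finset.mem_sdiff] at hs'
      obtain ⟨p, hp⟩ := Finset.card_pos.mp (show 0 < (S ∩ T).card by omega)
      rw [Finset.mem_inter] at hp
      obtain ⟨z, hz, ht⟩ := hS.cl p hp.1 s hs'.1 (by rintro rfl; exact hs'.2 hp.2)
      have hz2 : z ∈ T := by
        by_contra hzT
        have : z ∈ S \ T := Finset.mem_sdiff.mpr ⟨hz, hzT⟩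
        rw [hs, Finset.mem_singleton] at this
        exact (ht.ne hB).2.2 this.symm
      exact hs'.2 (hT.third hB ht.swap23 hp.2 hz2)
    · exfalso
      apply hne
      have h1 : S ∩ T = S := Finset.eq_of_subset_of_card_le Finset.inter_subset_left (by rw [hk, hS.card])
      have h2 : S ∩ T = T := Finset.eq_of_subset_of_card_le Finset.inter_subset_right (by rw [hk, hT.card])
      rw [← h1, h2]
  refine ⟨hk, ?_⟩
  have d1 : (S \ T).card = 4 := by omega
  have d2 : (T \ S).card = 4 := by omega
  rw [d1, d2, c3, hk] at m2
  norm_num [-Finset.compl_union] at m2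
  have x1 := r1.2.2 rfl (by omega)
  have x2 := r3.2.2 rfl (by omega)
  have x3 := r5.2.2 rfl (by omega)
  rcases x1 with ⟨ha, hb⟩ | ⟨ha, hb⟩
  · rcases x2 with ⟨hb', hc⟩ | ⟨hb', hc⟩
    · exact absurd hb' hb
    · rcases x3 with ⟨hc', hd⟩ | ⟨hc', hd⟩
      · exact Or.inl ⟨ha, hc, hb, hd⟩
      · exact absurd hc hc'
  · rcases x2 with ⟨hb', hc⟩ | ⟨hb', hc⟩
    · rcases x3 with ⟨hc', hd⟩ | ⟨hc', hd⟩
      · exact absurd hc' hc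
      · exact Or.inr ⟨hb, hd, ha, hc⟩
    · exact absurd hb hb'

end pair


/-! ### The impossible configuration of four planes -/

theorem mem_of_nodup {S : Finset (Fin 17)} (hS : S.card = 7) {l : List (Fin 17)} (hl : l.Nodup)
    (h7 : l.length = 7) (hm : ∀ t ∈ l, t ∈ S) {t : Fin 17} (ht : t ∈ S) : t ∈ l := by
  have : l.toFinset = S := by
    apply Finset.eq_of_subset_of_card_le
    · intro u hu; exact hm u (List.mem_toFinset.mp hu)
    · rw [List.toFinset_card_of_nodup hl, h7, hS]
  rw [← this] at ht
  exact List.mem_toFinset.mp ht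

theorem fano_complete {B : Finset (Finset (Fin 17))} (hB : isPTS B) {S : Finset (Fin 17)}
    (hS : Fan B S) {p x y x' y' x'' y'' : Fin 17} (hp : p ∈ S) (hx : x ∈ S) (hx' : x' ∈ S)
    (h1 : Tri B p x y) (h2 : Tri B p x' y') (h3 : Tri B x x' x'') (h4 : Tri B p x'' y'')
    (hn : x' ≠ y) :
    Tri B x y' y'' ∧ Tri B y x' y'' ∧ Tri B y y' x'' ∧
      ∀ t ∈ S, t = p ∨ t = x ∨ t = y ∨ t = x' ∨ t = y' ∨ t = x'' ∨ t = y'' := by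
  have hy := hS.third hB h1 hp hx
  have hy' := hS.third hB h2 hp hx'
  have hx'' := hS.third hB h3 hx hx'
  have hy'' := hS.third hB h4 hp hx''
  have s12 : ∀ u v w, Tri B u v w → Tri B v u w := fun _ _ _ h => h.swap12
  have s23 : ∀ u v w, Tri B u v w → Tri B u w v := fun _ _ _ h => h.swap23
  have un : ∀ u v w w', Tri B u v w → Tri B u v w' → w = w' := fun _ _ _ _ h h' => h.uniq hB h'
  have n1 := h1.ne hB
  have n2 := h2.ne hB
  have n3 := h3.ne hB
  have n4 := h4.ne hB
  have nd : [p, x, y, x', y', x'', y''].Nodup := by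
    have a1 : x ≠ y' := by rintro rfl; exact hn (un _ _ _ _ h2.swap23 h1)
    have a2 : y ≠ y' := by rintro rfl; exact n3.1 (un _ _ _ _ h1.swap23 h2.swap23)
    have a3 : p ≠ x'' := by rintro rfl; exact hn (un _ _ _ _ h3.swap23.swap12 h1)
    have a4 : y ≠ x'' := by rintro rfl; exact n2.1 (un _ _ _ _ h1.rot.swap23.swap23 h3.swap23)
    have a5 : y' ≠ x'' := by
      rintro rfl; exact n1.1 (un _ _ _ _ h2.rot h3.rot)
    have a6 : x ≠ y'' := by rintro rfl; exact a4 (un _ _ _ _ h1 h4.swap23)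
    have a7 : y ≠ y'' := by rintro rfl; exact n3.2.1 (un _ _ _ _ h1.swap23 h4.swap23)
    have a8 : x' ≠ y'' := by rintro rfl; exact a5 (un _ _ _ _ h2 h4.swap23)
    have a9 : y' ≠ y'' := by rintro rfl; exact n3.2.2 (un _ _ _ _ h2.swap23 h4.swap23)
    simp only [List.nodup_cons, List.mem_cons, List.not_mem_nil, or_false, not_or,
      List.nodup_nil, not_false_eq_true, and_true]
    have a10 := hn.symm
    refine ⟨⟨n1.1, n1.2.1, n2.1, n2.2.1, a3, n4.2.1⟩, ⟨n1.2.2, n3.1, a1, n3.2.1, a6⟩,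
      ⟨a10, a2, a4, a7⟩, ⟨n2.2.2, n3.2.2, a8⟩, ⟨a5, a9⟩, n4.2.2⟩
  have mem : ∀ t ∈ S, t = p ∨ t = x ∨ t = y ∨ t = x' ∨ t = y' ∨ t = x'' ∨ t = y'' := by
    intro t ht
    have := mem_of_nodup hS.card nd rfl (by simp [*]) ht
    simpa using this
  simp only [List.nodup_cons, List.mem_cons, List.not_mem_nil, or_false, not_or,
      List.nodup_nil, not_false_eq_true, and_true] at nd
  obtain ⟨⟨b1, b2, b3, b4, b5, b6⟩, ⟨b7, b8, b9, b10, b11⟩, ⟨b12, b13, b14, b15⟩, ⟨b16, b17, b18⟩,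
    ⟨b19, b20⟩, b21⟩ := nd
  have first : Tri B x y' y'' := by
    obtain ⟨t, ht, h⟩ := hS.cl x hx y' hy' b9
    have hh := h.ne hB
    rcases mem t ht with rfl | rfl | rfl | rfl | rfl | rfl | rfl
    · exact absurd (un _ _ _ _ h1.swap12 h.swap23) b13
    · exact absurd rfl hh.2.1
    · exact absurd (un _ _ _ _ h1.rot h.swap23) b4
    · exact absurd (un _ _ _ _ h3 h.swap23) (Ne.symm b19)
    · exact absurd rfl hh.2.2
    · exact absurd (un _ _ _ _ h3.swap23 h.swap23) b16
    · exact h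
  refine ⟨first, ?_, ?_, mem⟩
  · obtain ⟨t, ht, h⟩ := hS.cl y hy x' hx' b12
    have hh := h.ne hB
    rcases mem t ht with rfl | rfl | rfl | rfl | rfl | rfl | rfl
    · exact absurd (un _ _ _ _ h1.rot.rot h.swap23) b8
    · exact absurd (un _ _ _ _ h1.rot.rot.swap23 h.swap23) b3
    · exact absurd rfl hh.2.1
    · exact absurd rfl hh.2.2
    · exact absurd (un _ _ _ _ h2.rot h.rot) b2
    · exact absurd (un _ _ _ _ h3.rot h.rot) b7
    · exact h
  · obtain ⟨t, ht, h⟩ := hS.cl y hy y' hy' b13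
    have hh := h.ne hB
    rcases mem t ht with rfl | rfl | rfl | rfl | rfl | rfl | rfl
    · exact absurd (un _ _ _ _ h1.rot.rot h.swap23) b9
    · exact absurd (un _ _ _ _ h1.rot.rot.swap23 h.swap23) b4
    · exact absurd rfl hh.2.1
    · exact absurd (un _ _ _ _ h2.rot h.rot.swap12) b2
    · exact absurd rfl hh.2.2
    · exact h
    · exact absurd (un _ _ _ _ first.rot h.rot) b7


theorem exists_line {B : Finset (Finset (Fin 17))} (hB : isPTS B) {S U : Finset (Fin 17)}
    (hS : Fan B S) (hU : Fan B U) {c : Fin 17} (h3 : (S ∩ U).card = 3) (hc : c ∈ S) (hc' : c ∈ U) :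
    ∃ p q, p ∈ S ∧ p ∈ U ∧ q ∈ S ∧ q ∈ U ∧ Tri B c p q := by
  obtain ⟨p, hp⟩ : ∃ p, p ∈ (S ∩ U).erase c := by
    apply Finset.card_pos.mp
    rw [Finset.card_erase_of_mem (Finset.mem_inter.mpr ⟨hc, hc'⟩), h3]; norm_num
  rw [Finset.mem_erase, Finset.mem_inter] at hp
  obtain ⟨q, hq, ht⟩ := hS.cl c hc p hp.2.1 (Ne.symm hp.1)
  exact ⟨p, q, hp.2.1, hp.2.2, hq, hU.third hB ht hc' hp.2.2, ht⟩

theorem common_point {B : Finset (Finset (Fin 17))} (hB : isPTS B) {S U U' : Finset (Fin 17)}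
    (hS : Fan B S) (hU : Fan B U) (hU' : Fan B U') {a c e : Fin 17} (hace : Tri B a c e)
    (haS : a ∈ S) (hcS : c ∈ S) (hcU : c ∈ U) (haU : a ∉ U) (haU' : a ∈ U') (hcU' : c ∉ U')
    (h3 : (S ∩ U).card = 3) (h3' : (S ∩ U').card = 3) :
    ∃ x y z, x ∈ S ∧ x ∈ U ∧ x ∈ U' ∧ y ∈ U ∧ z ∈ U' ∧ Tri B c x y ∧ Tri B a x z := by
  obtain ⟨p, q, hpS, hpU, hqS, hqU, h1⟩ := exists_line hB hS hU h3 hcS hcU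
  obtain ⟨r, s, hrS, hrU, hsS, hsU, h2⟩ := exists_line hB hS hU' h3' haS haU'
  by_cases e1 : p = r
  · subst e1; exact ⟨p, q, s, hpS, hpU, hrU, hqU, hsU, h1, h2⟩
  by_cases e2 : p = s
  · subst e2; exact ⟨p, q, r, hpS, hpU, hsU, hqU, hrU, h1, h2.swap23⟩
  by_cases e3 : q = r
  · subst e3; exact ⟨q, p, s, hqS, hqU, hrU, hpU, hsU, h1.swap23, h2⟩
  by_cases e4 : q = s
  · subst e4; exact ⟨q, p, r, hqS, hqU, hsU, hpU, hrU, h1.swap23, h2.swap23⟩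
  exfalso
  have heS := hS.third hB hace haS hcS
  have heU : e ∉ U := fun h => haU (hU.third hB hace.rot hcU h)
  have heU' : e ∉ U' := fun h => hcU' (hU'.third hB hace.swap23 haU' h)
  have n0 := hace.ne hB
  have n1 := h1.ne hB
  have n2 := h2.ne hB
  have nap : a ≠ p := by rintro rfl; exact haU hpU
  have naq : a ≠ q := by rintro rfl; exact haU hqU
  have nep : e ≠ p := by rintro rfl; exact heU hpU
  have neq : e ≠ q := by rintro rfl; exact heU hqU
  have ncr : c ≠ r := by rintro rfl; exact hcU' hrU
  have ncs : c ≠ s := by rintro rfl; exact hcU' hsU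
  have ner : e ≠ r := by rintro rfl; exact heU' hrU
  have nes : e ≠ s := by rintro rfl; exact heU' hsU
  have nd : [a, c, e, p, q, r, s].Nodup := by
    simp only [List.nodup_cons, List.mem_cons, List.not_mem_nil, or_false, not_or,
      List.nodup_nil, not_false_eq_true, and_true]
    exact ⟨⟨n0.1, n0.2.1, nap, naq, n2.1, n2.2.1⟩, ⟨n0.2.2, n1.1, n1.2.1, ncr, ncs⟩,
      ⟨nep, neq, ner, nes⟩, ⟨n1.2.2, e1, e2⟩, ⟨e3, e4⟩, n2.2.2⟩
  obtain ⟨t, ht, h⟩ := hS.cl a haS p hpS nap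
  have hh := h.ne hB
  have mem := mem_of_nodup hS.card nd rfl (by simp [*]) ht
  simp only [List.mem_cons, List.not_mem_nil, or_false] at mem
  rcases mem with rfl | rfl | rfl | rfl | rfl | rfl | rfl
  · exact hh.2.1 rfl
  · exact nep (hace.uniq hB h.swap23)
  · exact n1.1 (hace.swap23.uniq hB h.swap23)
  · exact hh.2.2 rfl
  · exact n0.1 ((h.rot).uniq hB h1.rot)
  · exact e2 (h.swap23.uniq hB h2)
  · exact e1 (h.swap23.uniq hB h2.swap23)

theorem plane_labels {B : Finset (Finset (Fin 17))} (hB : isPTS B) {S U U' : Finset (Fin 17)}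
    (hS : Fan B S) (hU : Fan B U) (hU' : Fan B U') {a c e : Fin 17} (hace : Tri B a c e)
    (haS : a ∈ S) (hcS : c ∈ S) (hcU : c ∈ U) (haU : a ∉ U) (haU' : a ∈ U') (hcU' : c ∉ U')
    (h3 : (S ∩ U).card = 3) (h3' : (S ∩ U').card = 3) :
    ∃ x y z w, x ∈ S ∧ x ∈ U ∧ x ∈ U' ∧ y ∈ U ∧ z ∈ U' ∧
      (∀ t ∈ S, t = a ∨ t = c ∨ t = e ∨ t = x ∨ t = y ∨ t = z ∨ t = w) ∧
      Tri B c x y ∧ Tri B c z w ∧ Tri B a x z ∧ Tri B a y w ∧ Tri B e x w ∧ Tri B e y z := by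
  obtain ⟨x, y, z, hxS, hxU, hxU', hyU, hzU', h1, h2⟩ :=
    common_point hB hS hU hU' hace haS hcS hcU haU haU' hcU' h3 h3'
  have hzS := hS.third hB h2 haS hxS
  obtain ⟨w, hw, h4⟩ := hS.cl c hcS z hzS (by rintro rfl; exact hcU' hzU')
  obtain ⟨k1, k2, k3, k4⟩ := fano_complete hB hS hcS hxS haS h1 hace.swap12 h2.swap12 h4
    (by rintro rfl; exact haU hyU)
  exact ⟨x, y, z, w, hxS, hxU, hxU', hyU, hzU', fun t ht => by have := k4 t ht; tauto,
    h1, h4, h2, k2.swap12, k1.swap12, k3.swap12⟩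

theorem no_four {B : Finset (Finset (Fin 17))} (hB : isPTS B) {a b c d : Fin 17}
    (hC : Cyc B a b c d) {S₁ S₂ U U' : Finset (Fin 17)}
    (hS₁ : Fan B S₁) (hS₂ : Fan B S₂) (hU : Fan B U) (hU' : Fan B U') (hne : S₁ ≠ S₂)
    (ha1 : a ∈ S₁) (hc1 : c ∈ S₁) (ha2 : a ∈ S₂) (hc2 : c ∈ S₂)
    (hcU : c ∈ U) (haU : a ∉ U) (haU' : a ∈ U') (hcU' : c ∉ U')
    (b1 : b ∉ S₁) (b2 : b ∉ S₂) (b3 : b ∉ U) (b4 : b ∉ U')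
    (d1 : d ∉ S₁) (d2 : d ∉ S₂) (d3 : d ∉ U) (d4 : d ∉ U') : False := by
  obtain ⟨e, he1, hace⟩ := hS₁.cl a ha1 c hc1 hC.ac
  have he2 := hS₂.third hB hace ha2 hc2
  have i12 := (hS₁.inter hB hC hS₂ hne).1
  have i1 := (hS₁.inter hB hC hU (by rintro rfl; exact haU ha1)).1
  have i2 := (hS₂.inter hB hC hU (by rintro rfl; exact haU ha2)).1
  have j1 := (hS₁.inter hB hC hU' (by rintro rfl; exact hcU' hc1)).1
  have j2 := (hS₂.inter hB hC hU' (by rintro rfl; exact hcU' hc2)).1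
  have n0 := hace.ne hB
  have hL : ∀ t, t ∈ S₁ → t ∈ S₂ → t = a ∨ t = c ∨ t = e := by
    have : ({a, c, e} : Finset (Fin 17)) = S₁ ∩ S₂ := by
      apply Finset.eq_of_subset_of_card_le
      · intro t ht
        simp only [Finset.mem_insert, Finset.mem_singleton] at ht
        rcases ht with rfl | rfl | rfl <;> simp [*]
      · rw [i12, Finset.card_eq_three.mpr ⟨a, c, e, n0.1, n0.2.1, n0.2.2, rfl⟩]
    intro t h1 h2
    have ht : t ∈ S₁ ∩ S₂ := Finset.mem_inter.mpr ⟨h1, h2⟩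
    rw [← this] at ht
    simpa using ht
  obtain ⟨x1, y1, z1, w1, x1S, x1U, x1U', y1U, z1U', m1, l11, l12, l13, l14, l15, l16⟩ :=
    plane_labels hB hS₁ hU hU' hace ha1 hc1 hcU haU haU' hcU' i1 j1
  obtain ⟨x2, y2, z2, w2, x2S, x2U, x2U', y2U, z2U', m2, l21, l22, l23, l24, l25, l26⟩ :=
    plane_labels hB hS₂ hU hU' hace ha2 hc2 hcU haU haU' hcU' i2 j2
  have heU : e ∉ U := fun h => haU (hU.third hB hace.rot hcU h)
  have x2n : x2 ∉ S₁ := by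
    intro h
    rcases hL _ h x2S with rfl | rfl | rfl
    · exact haU x2U
    · exact hcU' x2U'
    · exact heU x2U
  have x1n : x1 ∉ S₂ := by
    intro h
    rcases hL _ x1S h with rfl | rfl | rfl
    · exact haU x1U
    · exact hcU' x1U'
    · exact heU x1U
  have y1S := hS₁.third hB l11 hc1 x1S
  have z1S := hS₁.third hB l13 ha1 x1S
  obtain ⟨x3, x3U, l3⟩ := hU.cl x1 x1U x2 x2U (by rintro rfl; exact x2n x1S)
  have x3U' := hU'.third hB l3 x1U' x2U'
  have x3n1 : x3 ∉ S₁ := fun h => x2n (hS₁.third hB l3.swap23 x1S h)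
  have x3n2 : x3 ∉ S₂ := fun h => x1n (hS₂.third hB l3.rot x2S h)
  obtain ⟨y3, y3U, l31⟩ := hU.cl c hcU x3 x3U (by rintro rfl; exact hcU' x3U')
  obtain ⟨z3, z3U', l33⟩ := hU'.cl a haU' x3 x3U' (by rintro rfl; exact haU x3U)
  have y3n1 : y3 ∉ S₁ := fun h => x3n1 (hS₁.third hB l31.swap23 hc1 h)
  have y3n2 : y3 ∉ S₂ := fun h => x3n2 (hS₂.third hB l31.swap23 hc2 h)
  have z3n1 : z3 ∉ S₁ := fun h => x3n1 (hS₁.third hB l33.swap23 ha1 h)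
  have z3n2 : z3 ∉ S₂ := fun h => x3n2 (hS₂.third hB l33.swap23 ha2 h)
  obtain ⟨u1, u2, u3, -⟩ := fano_complete hB hU hcU x1U x2U l11 l21 l3 l31
    (by rintro rfl; exact x2n y1S)
  obtain ⟨v1, v2, v3, -⟩ := fano_complete hB hU' haU' x1U' x2U' l13 l23 l3 l33
    (by rintro rfl; exact x2n z1S)
  have hR : ((S₁ ∪ S₂)ᶜ).card = 6 := by
    have := Finset.card_union_add_card_inter S₁ S₂
    rw [hS₁.card, hS₂.card, i12] at this
    rw [Finset.card_compl, Fintype.card_fin]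
    omega
  have hsub : ([x3, y3, z3, b, d] : List (Fin 17)).toFinset ⊆ (S₁ ∪ S₂)ᶜ := by
    intro t ht
    simp only [List.mem_toFinset, List.mem_cons, List.not_mem_nil, or_false] at ht
    rw [Finset.mem_compl, Finset.mem_union, not_or]
    rcases ht with rfl | rfl | rfl | rfl | rfl <;> constructor <;> assumption
  have hnd : ([x3, y3, z3, b, d] : List (Fin 17)).Nodup := by
    simp only [List.nodup_cons, List.mem_cons, List.not_mem_nil, or_false, not_or,
      List.nodup_nil, not_false_eq_true, and_true]
    refine ⟨⟨(l31.ne hB).2.2, (l33.ne hB).2.2, ?_, ?_⟩, ⟨?_, ?_, ?_⟩, ⟨?_, ?_⟩, hC.bd⟩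
    · rintro rfl; exact b3 x3U
    · rintro rfl; exact d3 x3U
    · rintro rfl; exact n0.1 (l33.rot.uniq hB l31.rot)
    · rintro rfl; exact b3 y3U
    · rintro rfl; exact d3 y3U
    · rintro rfl; exact b4 z3U'
    · rintro rfl; exact d4 z3U'
  obtain ⟨w3, hw3⟩ : ∃ w3, (S₁ ∪ S₂)ᶜ \ ([x3, y3, z3, b, d] : List (Fin 17)).toFinset = {w3} := by
    rw [← Finset.card_eq_one, Finset.card_sdiff_of_subset hsub, hR,
      List.toFinset_card_of_nodup hnd]
    rfl
  let f : Fin 17 → Fin 17 := ![a, c, e, x1, y1, z1, w1, x2, y2, z2, w2, x3, y3, z3, w3, b, d]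
  have fsurj : Function.Surjective f := by
    intro p
    by_cases p1 : p ∈ S₁
    · rcases m1 p p1 with h | h | h | h | h | h | h
      · exact ⟨0, h.symm⟩
      · exact ⟨1, h.symm⟩
      · exact ⟨2, h.symm⟩
      · exact ⟨3, h.symm⟩
      · exact ⟨4, h.symm⟩
      · exact ⟨5, h.symm⟩
      · exact ⟨6, h.symm⟩
    by_cases p2 : p ∈ S₂
    · rcases m2 p p2 with h | h | h | h | h | h | h
      · exact ⟨0, h.symm⟩
      · exact ⟨1, h.symm⟩
      · exact ⟨2, h.symm⟩
      · exact ⟨7, h.symm⟩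
      · exact ⟨8, h.symm⟩
      · exact ⟨9, h.symm⟩
      · exact ⟨10, h.symm⟩
    by_cases p3 : p ∈ ([x3, y3, z3, b, d] : List (Fin 17)).toFinset
    · simp only [List.mem_toFinset, List.mem_cons, List.not_mem_nil, or_false] at p3
      rcases p3 with h | h | h | h | h
      · exact ⟨11, h.symm⟩
      · exact ⟨12, h.symm⟩
      · exact ⟨13, h.symm⟩
      · exact ⟨15, h.symm⟩
      · exact ⟨16, h.symm⟩
    · have : p ∈ (S₁ ∪ S₂)ᶜ \ ([x3, y3, z3, b, d] : List (Fin 17)).toFinset := by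
        rw [Finset.mem_sdiff, Finset.mem_compl, Finset.mem_union, not_or]
        exact ⟨⟨p1, p2⟩, p3⟩
      rw [hw3, Finset.mem_singleton] at this
      exact ⟨14, this.symm⟩
  have finj : Function.Injective f := Finite.injective_iff_surjective.mpr fsurj
  let T : ℕ → ℕ → ℕ → Prop := fun i j k => ∃ (i' j' k' : Fin 17),
    i'.val = i ∧ j'.val = j ∧ k'.val = k ∧ Tri B (f i') (f j') (f k')
  have hT : LSys T := by
    refine ⟨?_, ?_, ?_, ?_, ?_⟩
    · rintro _ _ _ ⟨i, j, k, rfl, rfl, rfl, h⟩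
      exact ⟨i.2, j.2, k.2⟩
    · rintro _ _ _ ⟨i, j, k, rfl, rfl, rfl, h⟩
      have := h.ne hB
      refine ⟨fun h' => this.1 ?_, fun h' => this.2.1 ?_, fun h' => this.2.2 ?_⟩ <;>
        rw [Fin.ext h']
    · rintro _ _ _ ⟨i, j, k, rfl, rfl, rfl, h⟩
      exact ⟨j, i, k, rfl, rfl, rfl, h.swap12⟩
    · rintro _ _ _ ⟨i, j, k, rfl, rfl, rfl, h⟩
      exact ⟨i, k, j, rfl, rfl, rfl, h.swap23⟩
    · rintro _ _ _ _ ⟨i, j, k, rfl, rfl, rfl, h⟩ ⟨i', j', k', hi, hj, rfl, h'⟩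
      rw [Fin.ext hi, Fin.ext hj] at h'
      rw [finj (h.uniq hB h')]
  have lvT : ∀ i j : Fin 17, Lv B (f i) (f j) → ∀ z, ¬ T i.val j.val z := by
    rintro i j h z ⟨i', j', k', hi, hj, rfl, h'⟩
    rw [Fin.ext hi, Fin.ext hj] at h'
    exact h.2 _ h'
  refine no_labelled hT (lvT 0 15 ?_) (lvT 1 15 ?_) (lvT 1 16 ?_) (lvT 0 16 ?_) ?_ ?_
  · rw [hC.lv]; exact Or.inl ⟨rfl, rfl⟩
  · rw [hC.lv]; exact Or.inr (Or.inr (Or.inr (Or.inl ⟨rfl, rfl⟩)))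
  · rw [hC.lv]; exact Or.inr (Or.inr (Or.inr (Or.inr (Or.inl ⟨rfl, rfl⟩))))
  · rw [hC.lv]; exact Or.inr (Or.inr (Or.inr (Or.inr (Or.inr (Or.inr (Or.inr ⟨rfl, rfl⟩))))))
  · intro i j hi hj hij hcov
    have hnl : ¬ Lv B (f ⟨i, hi⟩) (f ⟨j, hj⟩) := by
      intro h
      rw [hC.lv] at h
      have fa : f 0 = a := rfl
      have fc : f 1 = c := rfl
      have fb : f 15 = b := rfl
      have fd : f 16 = d := rfl
      rw [← fa, ← fb, ← fc, ← fd] at h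
      simp only [finj.eq_iff, Fin.ext_iff] at h
      rcases h with ⟨h, h'⟩ | ⟨h, h'⟩ | ⟨h, h'⟩ | ⟨h, h'⟩ | ⟨h, h'⟩ | ⟨h, h'⟩ | ⟨h, h'⟩ | ⟨h, h'⟩ <;>
        (rw [h, h'] at hcov; revert hcov; decide)
    have : ∃ z, Tri B (f ⟨i, hi⟩) (f ⟨j, hj⟩) z := by
      by_contra hc
      push Not at hc
      refine hnl ⟨fun h => hij ?_, hc⟩
      have := finj h
      simpa [Fin.ext_iff] using this
    obtain ⟨z, hz⟩ := this
    obtain ⟨k, rfl⟩ := fsurj z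
    exact ⟨k.val, ⟨i, hi⟩, ⟨j, hj⟩, k, rfl, rfl, rfl, hz⟩
  · have mk : ∀ i j k : Fin 17, Tri B (f i) (f j) (f k) → T i.val j.val k.val :=
      fun i j k h => ⟨i, j, k, rfl, rfl, rfl, h⟩
    intro t ht
    simp only [startTriples, List.mem_cons, List.not_mem_nil, or_false] at ht
    rcases ht with rfl | rfl | rfl | rfl | rfl | rfl | rfl | rfl | rfl | rfl | rfl | rfl | rfl |
      rfl | rfl | rfl | rfl | rfl | rfl | rfl | rfl | rfl
    · exact mk 0 1 2 hace
    · exact mk 1 3 4 l11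
    · exact mk 1 5 6 l12
    · exact mk 0 3 5 l13
    · exact mk 0 4 6 l14
    · exact mk 2 3 6 l15
    · exact mk 2 4 5 l16
    · exact mk 1 7 8 l21
    · exact mk 1 9 10 l22
    · exact mk 0 7 9 l23
    · exact mk 0 8 10 l24
    · exact mk 2 7 10 l25
    · exact mk 2 8 9 l26
    · exact mk 1 11 12 l31
    · exact mk 3 7 11 l3
    · exact mk 3 8 12 u1
    · exact mk 4 7 12 u2
    · exact mk 4 8 11 u3
    · exact mk 0 11 13 l33
    · exact mk 3 9 13 v1
    · exact mk 5 7 13 v2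
    · exact mk 5 9 11 v3


/-! ### Four planes force Type-Q -/

theorem main_aux {B : Finset (Finset (Fin 17))} (hB : isPTS B) {a b c d : Fin 17}
    (hC : Cyc B a b c d) (F : Finset (Finset (Fin 17))) (hF : ∀ S ∈ F, Fan B S)
    (h4 : 4 ≤ F.card) {S₀ T₀ : Finset (Fin 17)} (hS₀ : S₀ ∈ F) (hT₀ : T₀ ∈ F) (hne : S₀ ≠ T₀)
    (haST : a ∈ S₀ ∪ T₀) (hb₀ : b ∉ S₀ ∪ T₀) (hd₀ : d ∉ S₀ ∪ T₀) :
    F.card ≤ 4 ∧ ∃ e, Tri B a c e ∧ Tri B b d e := by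
  have hbd : ∀ S ∈ F, b ∉ S ∧ d ∉ S := by
    intro S hS
    simp only [Finset.mem_union, not_or] at hb₀ hd₀ haST
    by_cases h1 : S = S₀
    · exact h1 ▸ ⟨hb₀.1, hd₀.1⟩
    by_cases h2 : S = T₀
    · exact h2 ▸ ⟨hb₀.2, hd₀.2⟩
    have i1 := (Fan.inter hB hC (hF S hS) (hF _ hS₀) h1).2
    have i2 := (Fan.inter hB hC (hF S hS) (hF _ hT₀) h2).2
    simp only [Finset.mem_union, not_or] at i1 i2
    rcases i1 with i1 | i1
    · exact ⟨i1.2.2.1.1, i1.2.2.2.1⟩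
    rcases i2 with i2 | i2
    · exact ⟨i2.2.2.1.1, i2.2.2.2.1⟩
    exact absurd haST (not_or.mpr ⟨i1.2.2.1.2, i2.2.2.1.2⟩)
  have hac : ∀ S ∈ F, ∀ T ∈ F, S ≠ T → (a ∈ S ∨ a ∈ T) ∧ (c ∈ S ∨ c ∈ T) := by
    intro S hS T hT hST
    have i1 := (Fan.inter hB hC (hF S hS) (hF _ hT) hST).2
    have hs := hbd S hS
    have ht := hbd T hT
    simp only [Finset.mem_union] at i1
    rcases i1 with i1 | i1
    · exact ⟨i1.1, i1.2.1⟩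
    · exact absurd i1.1 (not_or.mpr ⟨hs.1, ht.1⟩)
  have hcard3 : ∀ S ∈ F, ∀ T ∈ F, S ≠ T → (S ∩ T).card = 3 := fun S hS T hT hST =>
    (Fan.inter hB hC (hF S hS) (hF _ hT) hST).1
  set G := F.filter (fun S => a ∈ S ∧ c ∈ S) with hG
  set X := F.filter (fun S => a ∉ S) with hX
  set Y := F.filter (fun S => c ∉ S) with hY
  have hX1 : X.card ≤ 1 := by
    rw [Finset.card_le_one]
    intro S hS T hT
    rw [hX, Finset.mem_filter] at hS hT
    by_contra hc
    exact absurd (hac S hS.1 T hT.1 hc).1 (not_or.mpr ⟨hS.2, hT.2⟩)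
  have hY1 : Y.card ≤ 1 := by
    rw [Finset.card_le_one]
    intro S hS T hT
    rw [hY, Finset.mem_filter] at hS hT
    by_contra hc
    exact absurd (hac S hS.1 T hT.1 hc).2 (not_or.mpr ⟨hS.2, hT.2⟩)
  have hFsub : F ⊆ G ∪ (X ∪ Y) := by
    intro S hS
    simp only [hG, hX, hY, Finset.mem_union, Finset.mem_filter]
    by_cases h1 : a ∈ S
    · by_cases h2 : c ∈ S
      · exact Or.inl ⟨hS, h1, h2⟩
      · exact Or.inr (Or.inr ⟨hS, h2⟩)
    · exact Or.inr (Or.inl ⟨hS, h1⟩)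
  have hcF : F.card ≤ G.card + (X.card + Y.card) :=
    (Finset.card_le_card hFsub).trans ((Finset.card_union_le _ _).trans
      (Nat.add_le_add_left (Finset.card_union_le _ _) _))
  have hcF1 : F.card ≤ G.card + 1 := by
    by_contra hcon
    have x1 : 0 < X.card := by omega
    have y1 : 0 < Y.card := by omega
    obtain ⟨U, hU⟩ := Finset.card_pos.mp x1
    obtain ⟨U', hU'⟩ := Finset.card_pos.mp y1
    obtain ⟨S₁, hS₁, S₂, hS₂, h12⟩ := Finset.one_lt_card.mp (show 1 < G.card by omega)
    rw [hX, Finset.mem_filter] at hU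
    rw [hY, Finset.mem_filter] at hU'
    rw [hG, Finset.mem_filter] at hS₁ hS₂
    have hUU : U ≠ U' := by
      rintro rfl
      have : F ⊆ insert U G := by
        intro S hS
        by_cases h : S = U
        · simp [h]
        · apply Finset.mem_insert_of_mem
          rw [hG, Finset.mem_filter]
          have := hac S hS U hU.1 h
          exact ⟨hS, this.1.resolve_right hU.2, this.2.resolve_right hU'.2⟩
      exact hcon ((Finset.card_le_card this).trans (Finset.card_insert_le _ _))
    have q := hac U hU.1 U' hU'.1 hUU
    exact no_four hB hC (hF _ hS₁.1) (hF _ hS₂.1) (hF _ hU.1) (hF _ hU'.1) h12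
      hS₁.2.1 hS₁.2.2 hS₂.2.1 hS₂.2.2 (q.2.resolve_right hU'.2) hU.2
      (q.1.resolve_left hU.2) hU'.2
      (hbd _ hS₁.1).1 (hbd _ hS₂.1).1 (hbd _ hU.1).1 (hbd _ hU'.1).1
      (hbd _ hS₁.1).2 (hbd _ hS₂.1).2 (hbd _ hU.1).2 (hbd _ hU'.1).2
  have hGF : ∀ S ∈ G, S ∈ F ∧ a ∈ S ∧ c ∈ S := by
    intro S hS
    rwa [hG, Finset.mem_filter] at hS
  obtain ⟨S₁, hS₁⟩ := Finset.card_pos.mp (show 0 < G.card by omega)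
  obtain ⟨e, -, hT⟩ := (hF S₁ (hGF _ hS₁).1).cl a (hGF _ hS₁).2.1 c (hGF _ hS₁).2.2 hC.ac
  have hne3 := hT.ne hB
  have heG : ∀ S ∈ G, e ∈ S := fun S hS =>
    (hF S (hGF _ hS).1).third hB hT (hGF _ hS).2.1 (hGF _ hS).2.2
  set L : Finset (Fin 17) := {a, c, e} with hL
  have hLc : L.card = 3 := hB.1 _ hT
  have hLS : ∀ S ∈ G, L ⊆ S := by
    intro S hS t ht
    simp only [hL, Finset.mem_insert, Finset.mem_singleton] at ht
    rcases ht with rfl | rfl | rfl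
    exacts [(hGF _ hS).2.1, (hGF _ hS).2.2, heG _ hS]
  have hLi : ∀ S ∈ G, ∀ T ∈ G, S ≠ T → S ∩ T = L := by
    intro S hS T hT hST
    refine (Finset.eq_of_subset_of_card_le (Finset.subset_inter (hLS S hS) (hLS T hT)) ?_).symm
    rw [hcard3 S (hGF _ hS).1 T (hGF _ hT).1 hST, hLc]
  have hbS : (G.biUnion (fun S => S \ L)).card = ∑ S ∈ G, (S \ L).card := by
    apply Finset.card_biUnion
    intro S hS T hT hST
    change Disjoint (S \ L) (T \ L)
    rw [Finset.disjoint_left]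
    intro t h1 h2
    rw [Finset.mem_sdiff] at h1 h2
    exact h1.2 (hLi S hS T hT hST ▸ Finset.mem_inter.mpr ⟨h1.1, h2.1⟩)
  have hb4 : ∑ S ∈ G, (S \ L).card = G.card * 4 := by
    rw [Finset.sum_const_nat]
    intro S hS
    rw [Finset.card_sdiff_of_subset (hLS S hS), (hF S (hGF _ hS).1).card, hLc]
  have heb : e ≠ b := fun h => (hbd _ (hGF _ hS₁).1).1 (h ▸ heG _ hS₁)
  have hed : e ≠ d := fun h => (hbd _ (hGF _ hS₁).1).2 (h ▸ heG _ hS₁)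
  set R : Finset (Fin 17) := (insert b (insert d L))ᶜ with hR
  have hbL : b ∉ insert d L := by
    simp only [hL, Finset.mem_insert, Finset.mem_singleton]
    have := hC.ab; have := hC.bc; have := hC.bd
    grind
  have hdL : d ∉ L := by
    simp only [hL, Finset.mem_insert, Finset.mem_singleton]
    have := hC.ad; have := hC.cd
    grind
  have hRc : R.card = 12 := by
    rw [hR, Finset.card_compl, Finset.card_insert_of_notMem hbL, Finset.card_insert_of_notMem hdL,
      hLc]
    rfl
  have hsub : G.biUnion (fun S => S \ L) ⊆ R := by
    intro t ht
    rw [Finset.mem_biUnion] at ht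
    obtain ⟨S, hS, ht⟩ := ht
    rw [Finset.mem_sdiff] at ht
    have := hbd S (hGF _ hS).1
    rw [hR, Finset.mem_compl, Finset.mem_insert, Finset.mem_insert]
    rintro (rfl | rfl | h)
    exacts [this.1 ht.1, this.2 ht.1, ht.2 h]
  have hle := Finset.card_le_card hsub
  have hG3 : G.card = 3 := by omega
  refine ⟨by omega, e, hT, ?_⟩
  have heq : G.biUnion (fun S => S \ L) = R :=
    Finset.eq_of_subset_of_card_le hsub (by omega)
  have hnl : ¬ Lv B e b := by
    rw [hC.lv]
    have := hC.ab; have := hC.bc; have := hC.bd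
    grind
  obtain ⟨y, hy⟩ : ∃ y, Tri B e b y := by
    by_contra hc
    push Not at hc
    exact hnl ⟨heb, hc⟩
  have hyn := hy.ne hB
  have hyS : ∀ S ∈ G, y ∉ S := fun S hS hyS =>
    (hbd S (hGF _ hS).1).1 ((hF S (hGF _ hS).1).third hB hy.swap23 (heG S hS) hyS)
  have hyR : y ∉ R := by
    rw [← heq, Finset.mem_biUnion]
    rintro ⟨S, hS, h⟩
    exact hyS S hS (Finset.mem_sdiff.mp h).1
  have hyL : y ∉ L := fun h => hyS S₁ hS₁ (hLS S₁ hS₁ h)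
  have hyd : y = d := by
    rw [hR, Finset.mem_compl, not_not, Finset.mem_insert, Finset.mem_insert] at hyR
    rcases hyR with h | h | h
    · exact absurd h.symm hyn.2.2
    · exact h
    · exact absurd h hyL
  subst hyd
  exact hy.rot

theorem main_bound {B : Finset (Finset (Fin 17))} (hB : isPTS B) {a b c d : Fin 17}
    (hC : Cyc B a b c d) (F : Finset (Finset (Fin 17))) (hF : ∀ S ∈ F, Fan B S)
    (h4 : 4 ≤ F.card) : F.card ≤ 4 ∧ ∃ e, Tri B a c e ∧ Tri B b d e := by
  obtain ⟨S₀, hS₀, T₀, hT₀, hne⟩ := Finset.one_lt_card.mp (show 1 < F.card by omega)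
  rcases (Fan.inter hB hC (hF _ hS₀) (hF _ hT₀) hne).2 with h | h
  · exact main_aux hB hC F hF h4 hS₀ hT₀ hne h.1 h.2.2.1 h.2.2.2
  · obtain ⟨h1, e, h2, h3⟩ := main_aux hB hC.rot F hF h4 hS₀ hT₀ hne h.1 h.2.2.2 h.2.2.1
    exact ⟨h1, e, h3.swap12, h2⟩

theorem Cyc.leave_eq {B : Finset (Finset (Fin 17))} (hB : isPTS B) {a b c d : Fin 17}
    (hC : Cyc B a b c d) : leave B = {{a, b}, {b, c}, {c, d}, {d, a}} := by
  have key : ∀ x y, x ≠ y → (({x, y} : Finset (Fin 17)) ∈ leave B ↔ Lv B x y) := by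
    intro x y hxy
    constructor
    · intro h
      exact ⟨hxy, fun z hz => h.2 _ hz (by intro t; simp; tauto)⟩
    · intro h
      refine ⟨Finset.card_pair hxy, fun T hT hs => ?_⟩
      obtain ⟨z, rfl⟩ := exists_tri hB hxy hT (hs (by simp)) (hs (by simp))
      exact h.2 z hT
  ext p
  constructor
  · intro hp
    obtain ⟨x, y, hxy, rfl⟩ := Finset.card_eq_two.mp hp.1
    rw [key x y hxy, hC.lv] at hp
    simp only [Set.mem_insert_iff, Set.mem_singleton_iff]
    rcases hp with ⟨rfl, rfl⟩ | ⟨rfl, rfl⟩ | ⟨rfl, rfl⟩ | ⟨rfl, rfl⟩ | ⟨rfl, rfl⟩ | ⟨rfl, rfl⟩ |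
      ⟨rfl, rfl⟩ | ⟨rfl, rfl⟩ <;> simp [Finset.pair_comm]
  · intro hp
    simp only [Set.mem_insert_iff, Set.mem_singleton_iff] at hp
    have := hC.ab; have := hC.bc; have := hC.cd; have := hC.ad.symm
    rcases hp with rfl | rfl | rfl | rfl
    all_goals
      rw [key _ _ (by assumption), hC.lv]
      simp

theorem Cyc.typeQ {B : Finset (Finset (Fin 17))} (hB : isPTS B) {a b c d : Fin 17}
    (hC : Cyc B a b c d) (h : ∃ e, Tri B a c e ∧ Tri B b d e) : isTypeQ B := by
  obtain ⟨e, h1, h2⟩ := h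
  exact ⟨a, b, c, d, hC.ab, hC.ac, hC.ad, hC.bc, hC.bd, hC.cd, hC.leave_eq hB, e, h1, h2⟩

open Classical in
/-- The planes of the system. -/
noncomputable def planes (B : Finset (Finset (Fin 17))) : Finset (Finset (Fin 17)) :=
  Finset.univ.filter (fun S => isFano B S)

theorem nat_card_eq (B : Finset (Finset (Fin 17))) :
    Nat.card {S : Finset (Fin 17) // isFano B S} = (planes B).card := by
  classical
  rw [Nat.card_eq_fintype_card, Fintype.card_subtype, planes]

theorem mem_planes {B : Finset (Finset (Fin 17))} {S : Finset (Fin 17)} :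
    S ∈ planes B ↔ isFano B S := by
  simp [planes]

/-! ### The example -/

/-- The triples of a Type-Q system with four planes. -/
def exL : List (Fin 17 × Fin 17 × Fin 17) :=
  [(0, 1, 2), (1, 3, 4), (1, 5, 6), (0, 3, 5), (0, 4, 6), (2, 3, 6), (2, 4, 5), (1, 7, 8),
   (1, 9, 10), (0, 7, 9), (0, 8, 10), (2, 7, 10), (2, 8, 9), (1, 11, 12), (1, 13, 14), (0, 11, 13),
   (0, 12, 14), (2, 11, 14), (2, 12, 13), (3, 7, 11), (3, 8, 12), (4, 7, 12), (4, 8, 11), (2, 15, 16),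
   (5, 7, 13), (6, 7, 15), (7, 14, 16), (5, 8, 15), (6, 8, 14), (8, 13, 16), (6, 9, 13), (6, 10, 11),
   (6, 12, 16), (9, 11, 15), (5, 11, 16), (5, 9, 12), (5, 10, 14), (10, 12, 15), (3, 9, 14), (4, 9, 16),
   (4, 10, 13), (3, 10, 16), (3, 13, 15), (4, 14, 15)]

/-- The underlying set of a list entry. -/
def tof (t : Fin 17 × Fin 17 × Fin 17) : Finset (Fin 17) := {t.1, t.2.1, t.2.2}

/-- The example as a set of triples. -/
def exB : Finset (Finset (Fin 17)) := (exL.map tof).toFinset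

theorem mem_exB {T : Finset (Fin 17)} : T ∈ exB ↔ ∃ t ∈ exL, tof t = T := by
  simp only [exB, List.mem_toFinset, List.mem_map]

theorem exL_card : ∀ t ∈ exL, (tof t).card = 3 := by
  have h : ∀ t ∈ exL, t.1 ≠ t.2.1 ∧ t.1 ≠ t.2.2 ∧ t.2.1 ≠ t.2.2 := by
    have h0 : exL.all (fun t => decide (t.1 ≠ t.2.1 ∧ t.1 ≠ t.2.2 ∧ t.2.1 ≠ t.2.2)) = true := by
      decide +kernel
    intro t ht
    exact of_decide_eq_true (List.all_eq_true.mp h0 t ht)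
  intro t ht
  obtain ⟨h1, h2, h3⟩ := h t ht
  exact Finset.card_eq_three.mpr ⟨_, _, _, h1, h2, h3, rfl⟩

theorem exL_inter : ∀ t ∈ exL, ∀ u ∈ exL, t = u ∨ (tof t ∩ tof u).card ≤ 1 := by
  have h : ∀ t ∈ exL, ∀ u ∈ exL, t = u ∨
      ∀ x ∈ tof t, ∀ y ∈ tof t, x = y ∨ x ∉ tof u ∨ y ∉ tof u := by decide +kernel
  intro t ht u hu
  refine (h t ht u hu).imp_right fun h' => Finset.card_le_one.mpr fun x hx y hy => ?_
  rw [Finset.mem_inter] at hx hy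
  rcases h' x hx.1 y hy.1 with e | e | e
  exacts [e, absurd hx.2 e, absurd hy.2 e]

theorem exB_card : exB.card = 44 := by
  rw [exB, List.toFinset_card_of_nodup, List.length_map]
  · rfl
  · refine List.Nodup.map_on ?_ (by decide +kernel)
    intro t ht u hu h
    rcases exL_inter t ht u hu with h' | h'
    · exact h'
    · rw [← h, Finset.inter_self, exL_card t ht] at h'
      omega

theorem exB_pts : isPTS exB := by
  constructor
  · intro T hT
    obtain ⟨t, ht, rfl⟩ := mem_exB.mp hT
    exact exL_card t ht
  · intro p hp T₁ h₁ T₂ h₂ s₁ s₂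
    obtain ⟨t, ht, rfl⟩ := mem_exB.mp h₁
    obtain ⟨u, hu, rfl⟩ := mem_exB.mp h₂
    rcases exL_inter t ht u hu with h | h
    · rw [h]
    · have := Finset.card_le_card (Finset.subset_inter s₁ s₂)
      omega

theorem exL_lv : ∀ x y : Fin 17, (x ≠ y ∧ ∀ t ∈ exL, ¬ (x ∈ tof t ∧ y ∈ tof t)) ↔
    (x = 0 ∧ y = 15) ∨ (x = 15 ∧ y = 0) ∨ (x = 15 ∧ y = 1) ∨ (x = 1 ∧ y = 15) ∨
    (x = 1 ∧ y = 16) ∨ (x = 16 ∧ y = 1) ∨ (x = 16 ∧ y = 0) ∨ (x = 0 ∧ y = 16) := by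
  decide +kernel

theorem exB_cyc : Cyc exB 0 15 1 16 where
  ab := by decide
  ac := by decide
  ad := by decide
  bc := by decide
  bd := by decide
  cd := by decide
  lv := by
    intro x y
    rw [← exL_lv x y]
    refine and_congr_right fun hxy => ⟨fun h t ht hm => ?_, fun h z hz => ?_⟩
    · have hT := mem_exB.mpr ⟨t, ht, rfl⟩
      obtain ⟨z, hz⟩ := exists_tri exB_pts hxy hT hm.1 hm.2
      rw [hz] at hT
      exact h z hT
    · obtain ⟨t, ht, e⟩ := mem_exB.mp hz
      exact h t ht (by rw [e]; simp)

theorem exL_fan : ∀ S ∈ ([{0,1,2,3,4,5,6}, {0,1,2,7,8,9,10}, {0,1,2,11,12,13,14},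
    {1,3,4,7,8,11,12}] : List (Finset (Fin 17))), ∀ x ∈ S, ∀ y ∈ S, x ≠ y →
    ∃ t ∈ exL, x ∈ tof t ∧ y ∈ tof t ∧ tof t ⊆ S := by
  have h0 : ([{0,1,2,3,4,5,6}, {0,1,2,7,8,9,10}, {0,1,2,11,12,13,14},
      {1,3,4,7,8,11,12}] : List (Finset (Fin 17))).all (fun S => decide (∀ x ∈ S, ∀ y ∈ S,
      x ≠ y → exL.any (fun t => decide (x ∈ tof t ∧ y ∈ tof t ∧ tof t ⊆ S)) = true)) = true := by
    decide +kernel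
  intro S hS x hx y hy hxy
  obtain ⟨t, ht, h⟩ := List.any_eq_true.mp
    (of_decide_eq_true (List.all_eq_true.mp h0 S hS) x hx y hy hxy)
  exact ⟨t, ht, of_decide_eq_true h⟩

theorem exB_fan : ∀ S ∈ ([{0,1,2,3,4,5,6}, {0,1,2,7,8,9,10}, {0,1,2,11,12,13,14},
    {1,3,4,7,8,11,12}] : List (Finset (Fin 17))), Fan exB S := by
  intro S hS
  have h := exL_fan S hS
  have h7 : S.card = 7 := by
    simp only [List.mem_cons, List.not_mem_nil, or_false] at hS
    rcases hS with rfl | rfl | rfl | rfl <;> rfl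
  refine ⟨h7, fun x hx y hy hxy => ?_⟩
  obtain ⟨t, ht, h1, h2, h3⟩ := h x hx y hy hxy
  have hT := mem_exB.mpr ⟨t, ht, rfl⟩
  obtain ⟨z, hz⟩ := exists_tri exB_pts hxy hT h1 h2
  rw [hz] at hT h3
  exact ⟨z, h3 (by simp), hT⟩

theorem exB_mm : isMMPTS exB := ⟨exB_pts, fun B' hB' => exB_card ▸ card_le_44 hB'⟩

theorem exB_planes : 4 ≤ (planes exB).card := by
  have h : ([{0,1,2,3,4,5,6}, {0,1,2,7,8,9,10}, {0,1,2,11,12,13,14},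
    {1,3,4,7,8,11,12}] : List (Finset (Fin 17))).toFinset ⊆ planes exB := fun S hS =>
    mem_planes.mpr ((exB_fan S (List.mem_toFinset.mp hS)).isFano exB_pts)
  refine le_trans ?_ (Finset.card_le_card h)
  rw [List.toFinset_card_of_nodup (by decide +kernel)]
  exact le_refl 4

theorem isMMPTS.card {B : Finset (Finset (Fin 17))} (h : isMMPTS B) : B.card = 44 :=
  le_antisymm (card_le_44 h.1) (exB_card ▸ h.2 _ exB_pts)

theorem planes_bound {B : Finset (Finset (Fin 17))} (h : isMMPTS B)
    (h4 : 4 ≤ (planes B).card) : (planes B).card ≤ 4 ∧ isTypeQ B := by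
  obtain ⟨a, b, c, d, hC⟩ := exists_cyc h.1 h.card
  have := main_bound h.1 hC (planes B) (fun S hS => (mem_planes.mp hS).fan h.1) h4
  exact ⟨this.1, hC.typeQ h.1 this.2⟩

theorem mmpts17_fano_bounds :
    (∀ B : Finset (Finset (Fin 17)), isMMPTS B →
      Nat.card {S : Finset (Fin 17) // isFano B S} ≤ 4) ∧
    (∃ B : Finset (Finset (Fin 17)), isMMPTS B ∧ isTypeQ B ∧
      Nat.card {S : Finset (Fin 17) // isFano B S} = 4) ∧
    (∀ B : Finset (Finset (Fin 17)), isMMPTS B → ¬ isTypeQ B →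
      Nat.card {S : Finset (Fin 17) // isFano B S} ≤ 3) := by
  refine ⟨fun B hB => ?_, ⟨exB, exB_mm, (planes_bound exB_mm exB_planes).2, ?_⟩, fun B hB hq => ?_⟩
  · rw [nat_card_eq]
    by_contra hc
    exact hc (planes_bound hB (by omega)).1
  · rw [nat_card_eq]
    exact le_antisymm (planes_bound exB_mm exB_planes).1 exB_planes
  · rw [nat_card_eq]
    by_contra hc
    exact hq (planes_bound hB (by omega)).2
end
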